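/- Under the Pólya urn hypotheses, assume sup_n ‖X_{n+1} − X_n‖_p < ∞ for every p ≥ 2, that Re λ₂ = b/2 (where λ₂ is a second eigenvalue of A as in the stated ordering, λ₁ = b), and that (X_n − E X_n)/√(n (log n)^{2ν₂+1}) converges in distribution as n → ∞ to the centered Gaussian law N(0, Σ) on ℝ^q for some covariance matrix Σ, where ν₂ := ν_{λ₂}. Then the convergence holds with convergence of all moments: for every real r ≥ 1, E|(X_n − E X_n)/√(n (log n)^{2ν₂+1})|^r → E|Z|^r, and for every multi-index α ∈ ℕ^q the corresponding mixed moments converge to those of Z ~ N(0, Σ). In particular, Cov(X_n)/(n (log n)^{2ν₂+1}) → Σ entrywise. -/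

import Mathlib

open MeasureTheory Matrix Filter

/-- `P` is the spectral projection of `A` for the eigenvalue `lam`: it is the identity
on the generalized eigenspace E_lam = ker((A − lam I)^q) and vanishes on the generalized
eigenspace E_mu = ker((A − mu I)^q) of every other eigenvalue `mu`. Since ℂ^q is the
direct sum of the generalized eigenspaces, these conditions determine `P` uniquely. -/
def IsSpectralProj {q : ℕ} (A : Matrix (Fin q) (Fin q) ℂ) (lam : ℂ)
    (P : Matrix (Fin q) (Fin q) ℂ) : Prop :=
  (∀ v : Fin q → ℂ, ((A - lam • 1) ^ q).mulVec v = 0 → P.mulVec v = v) ∧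
  ∀ mu : ℂ, mu ≠ lam → ∀ v : Fin q → ℂ, ((A - mu • 1) ^ q).mulVec v = 0 → P.mulVec v = 0

/-- `ν` is the nilpotency index ν_lam of N_lam := (A − lam I) P_lam, i.e. the unique
integer ν ≥ 0 with N_lam^(ν+1) = 0 and (ν = 0 or N_lam^ν ≠ 0). -/
def NilIndexOf {q : ℕ} (A : Matrix (Fin q) (Fin q) ℂ) (lam : ℂ)
    (P : Matrix (Fin q) (Fin q) ℂ) (ν : ℕ) : Prop :=
  ((A - lam • 1) * P) ^ (ν + 1) = 0 ∧ (ν = 0 ∨ ((A - lam • 1) * P) ^ ν ≠ 0)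

/-- `mu` is a candidate for the second eigenvalue λ₂ in the ordered listing
λ₁, λ₂, …, λ_q of the eigenvalues of `Ac` with algebraic multiplicity (λ₁ = b being
first): either `mu` is an eigenvalue different from b, or `mu = b` and b occurs with
algebraic multiplicity at least 2. -/
def MemSecondEigSet {q : ℕ} (Ac : Matrix (Fin q) (Fin q) ℂ) (b : ℝ) (mu : ℂ) : Prop :=
  (mu ≠ (b : ℂ) ∧ mu ∈ spectrum ℂ Ac) ∨
  (mu = (b : ℂ) ∧ 2 ≤ Polynomial.rootMultiplicity (b : ℂ) (Matrix.charpoly Ac))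

/-!
Convergence in distribution improves to convergence of moments as soon as all moments of the
rescaled process stay bounded, so everything rests on `‖X n - E (X n)‖_p ^ 2 = O(n log ^ (2ν+1) n)`
for even `p`.

For a centered martingale step, `‖f + g‖_p ^ 2 ≤ ‖f‖_p ^ 2 + K ‖g‖_p ^ 2`. Applied to
`l · (X (n + 1) - E X (n + 1))` it yields
`‖l · Y (n + 1)‖ ^ 2 ≤ ‖(l + w n ⁻¹ Aᵀ l) · Y n‖ ^ 2 + O(1)` with `Y n = X n - E (X n)`. Along a
chain of generalized eigenvectors `l` of `Aᵀ` for an eigenvalue of real part `b / 2` the homogeneous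
factor is `1 + 1 / n + O(1 / n ^ 2)`, so `‖l · Y n‖ ^ 2 = O(n log n)` for an eigenvector `l`, and
every further level of the Jordan chain costs a factor `log ^ 2 n`; eigenvalues of smaller real part
contribute `O(n)`. The remaining direction is `a` itself, on which `Y n` vanishes by balance.
-/

open scoped RealInnerProductSpace NNReal ENNReal Topology Asymptotics

section MomentInequality

lemma sq_add_two_mul_add_sq_pow_le (m : ℕ) {X Y z : ℝ} (hX : 0 ≤ X) (hY : 0 ≤ Y)
    (hz : |z| ≤ X * Y) :
    (X ^ 2 + 2 * z + Y ^ 2) ^ (m + 1) ≤ X ^ (2 * m + 2) + 2 * (m + 1) * (X ^ (2 * m) * z)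
      + (3 * m + 1) * (m + 1) * ((X + Y) ^ (2 * m) * Y ^ 2) := by
  induction m with
  | zero => simp
  | succ m ih =>
    obtain ⟨hz₁, hz₂⟩ := abs_le.1 hz
    have hsq : 0 ≤ X ^ 2 + 2 * z + Y ^ 2 := by nlinarith [sq_nonneg (X - Y)]
    have hle : X ^ 2 + 2 * z + Y ^ 2 ≤ (X + Y) ^ 2 := by nlinarith
    have hXm : X ^ (2 * m) ≤ (X + Y) ^ (2 * m) := by gcongr; linarith
    have hremainder : 2 * (m + 1) * (X ^ (2 * m) * z) * (2 * z + Y ^ 2) + X ^ (2 * m + 2) * Y ^ 2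
        ≤ (6 * m + 7) * ((X + Y) ^ (2 * m + 2) * Y ^ 2) := by
      have hbase : 2 * (m + 1) * (z * (2 * z + Y ^ 2)) + X ^ 2 * Y ^ 2
          ≤ (6 * m + 7) * (Y ^ 2 * (X + Y) ^ 2) := by
        have hz2 : z * (2 * z + Y ^ 2) ≤ 3 * (Y ^ 2 * (X + Y) ^ 2) := by
          have : z ^ 2 ≤ (X * Y) ^ 2 := sq_le_sq' (by linarith) hz₂
          nlinarith [mul_nonneg hX hY, mul_nonneg (mul_nonneg hX hY) (sq_nonneg Y), sq_nonneg Y,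
            mul_le_mul_of_nonneg_right hz₂ (sq_nonneg Y), sq_nonneg (X * Y), sq_nonneg (Y * Y)]
        have hXY : X ^ 2 * Y ^ 2 ≤ Y ^ 2 * (X + Y) ^ 2 := by
          nlinarith [mul_nonneg (mul_nonneg hX hY) (sq_nonneg Y), sq_nonneg (Y * Y)]
        nlinarith [mul_le_mul_of_nonneg_left hz2 (by positivity : (0 : ℝ) ≤ 2 * (m + 1))]
      calc _ = X ^ (2 * m) * (2 * (m + 1) * (z * (2 * z + Y ^ 2)) + X ^ 2 * Y ^ 2) := by ring
        _ ≤ X ^ (2 * m) * ((6 * m + 7) * (Y ^ 2 * (X + Y) ^ 2)) := by gcongr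
        _ ≤ (X + Y) ^ (2 * m) * ((6 * m + 7) * (Y ^ 2 * (X + Y) ^ 2)) := by gcongr
        _ = _ := by ring
    calc (X ^ 2 + 2 * z + Y ^ 2) ^ (m + 1 + 1)
        ≤ (X ^ (2 * m + 2) + 2 * (m + 1) * (X ^ (2 * m) * z)) * (X ^ 2 + 2 * z + Y ^ 2)
          + (3 * m + 1) * (m + 1) * ((X + Y) ^ (2 * m) * Y ^ 2) * (X ^ 2 + 2 * z + Y ^ 2) := by
          rw [pow_succ, ← add_mul]
          gcongr
      _ ≤ (X ^ (2 * m + 2) + 2 * (m + 1) * (X ^ (2 * m) * z)) * (X ^ 2 + 2 * z + Y ^ 2)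
          + (3 * m + 1) * (m + 1) * ((X + Y) ^ (2 * m) * Y ^ 2) * (X + Y) ^ 2 := by gcongr
      _ ≤ _ := by
          push_cast
          linear_combination hremainder

lemma norm_add_pow_le {H : Type*} [NormedAddCommGroup H] [InnerProductSpace ℝ H] (m : ℕ)
    (x y : H) :
    ‖x + y‖ ^ (2 * m + 2) ≤ ‖x‖ ^ (2 * m + 2) + 2 * (m + 1) * (‖x‖ ^ (2 * m) * ⟪x, y⟫)
      + (3 * m + 1) * (m + 1) * ((‖x‖ + ‖y‖) ^ (2 * m) * ‖y‖ ^ 2) := by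
  have h := sq_add_two_mul_add_sq_pow_le m (norm_nonneg x) (norm_nonneg y)
    (abs_real_inner_le_norm x y)
  rwa [← norm_add_sq_real, ← pow_mul, mul_add_one] at h

variable {Ω : Type*} {𝓂 m₀ : MeasurableSpace Ω} {μ : Measure Ω}
variable {E F : Type*} [NormedAddCommGroup E] [NormedAddCommGroup F]

lemma integral_norm_pow_eq_lpNorm_pow {n : ℕ} (hn : n ≠ 0)
    {f : Ω → E} (hf : AEStronglyMeasurable f μ) :
    ∫ ω, ‖f ω‖ ^ n ∂μ = lpNorm f n μ ^ n := by
  rw [lpNorm_eq_integral_norm_rpow_toReal (by simpa using hn) (ENNReal.natCast_ne_top _) hf]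
  simp only [ENNReal.toReal_natCast, Real.rpow_natCast]
  exact (Real.rpow_inv_natCast_pow (by positivity) hn).symm

lemma eLpNorm_pow_eq_lintegral_rpow {n : ℕ} (hn : n ≠ 0) (f : Ω → E) (j : ℕ) :
    eLpNorm f n μ ^ j = (∫⁻ ω, ‖f ω‖ₑ ^ n ∂μ) ^ ((j : ℝ) / n) := by
  rw [eLpNorm_eq_lintegral_rpow_enorm_toReal (by simpa using hn) (ENNReal.natCast_ne_top _),
    ← ENNReal.rpow_natCast, ← ENNReal.rpow_mul]
  simp [div_eq_inv_mul]

lemma lintegral_enorm_pow_mul_enorm_pow_le {j k : ℕ} (hjk : j + k ≠ 0) {f : Ω → E} {g : Ω → F}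
    (hf : AEStronglyMeasurable f μ) (hg : AEStronglyMeasurable g μ) :
    ∫⁻ ω, ‖f ω‖ₑ ^ j * ‖g ω‖ₑ ^ k ∂μ
      ≤ eLpNorm f (j + k : ℕ) μ ^ j * eLpNorm g (j + k : ℕ) μ ^ k := by
  have hjk' : ((j + k : ℕ) : ℝ) ≠ 0 := by exact_mod_cast hjk
  have hroot (x : ℝ≥0∞) (i : ℕ) : (x ^ (j + k)) ^ ((i : ℝ) / (j + k : ℕ)) = x ^ i := by
    rw [← ENNReal.rpow_natCast, ← ENNReal.rpow_mul, mul_div_cancel₀ _ hjk', ENNReal.rpow_natCast]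
  rw [eLpNorm_pow_eq_lintegral_rpow hjk, eLpNorm_pow_eq_lintegral_rpow hjk]
  have holder := ENNReal.lintegral_mul_norm_pow_le (hf.enorm.pow_const (j + k))
    (hg.enorm.pow_const (j + k)) (p := (j : ℝ) / (j + k : ℕ)) (q := (k : ℝ) / (j + k : ℕ))
    (by positivity) (by positivity) (by rw [← add_div, ← Nat.cast_add, div_self hjk'])
  simpa only [hroot] using holder

lemma integrable_norm_pow_mul_norm_pow {j k : ℕ} (hjk : j + k ≠ 0) {f : Ω → E} {g : Ω → F}
    (hf : MemLp f (j + k : ℕ) μ) (hg : MemLp g (j + k : ℕ) μ) :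
    Integrable (fun ω => ‖f ω‖ ^ j * ‖g ω‖ ^ k) μ := by
  refine ⟨(hf.1.norm.pow _).mul (hg.1.norm.pow _), ?_⟩
  have hle := lintegral_enorm_pow_mul_enorm_pow_le hjk hf.1 hg.1
  simp only [HasFiniteIntegral, enorm_mul, enorm_pow, enorm_norm]
  exact hle.trans_lt (ENNReal.mul_lt_top (ENNReal.pow_lt_top hf.2) (ENNReal.pow_lt_top hg.2))

lemma integral_norm_pow_mul_norm_pow_le {j k : ℕ} (hjk : j + k ≠ 0) {f : Ω → E} {g : Ω → F}
    (hf : MemLp f (j + k : ℕ) μ) (hg : MemLp g (j + k : ℕ) μ) :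
    ∫ ω, ‖f ω‖ ^ j * ‖g ω‖ ^ k ∂μ ≤ lpNorm f (j + k : ℕ) μ ^ j * lpNorm g (j + k : ℕ) μ ^ k := by
  have hle := ENNReal.toReal_mono
    (ENNReal.mul_ne_top (ENNReal.pow_ne_top hf.2.ne) (ENNReal.pow_ne_top hg.2.ne))
    (lintegral_enorm_pow_mul_enorm_pow_le hjk hf.1 hg.1)
  rw [ENNReal.toReal_mul, ENNReal.toReal_pow, ENNReal.toReal_pow, toReal_eLpNorm hf.1,
    toReal_eLpNorm hg.1] at hle
  refine le_of_eq_of_le ?_ hle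
  rw [integral_eq_lintegral_of_nonneg_ae (ae_of_all _ fun ω => by positivity)
    (integrable_norm_pow_mul_norm_pow hjk hf hg).1]
  simp only [ENNReal.ofReal_mul' (pow_nonneg (norm_nonneg _) _),
    ENNReal.ofReal_pow (norm_nonneg _), ofReal_norm]

variable {H : Type*} [NormedAddCommGroup H] [InnerProductSpace ℝ H]

lemma integrable_norm_pow_mul_inner (m : ℕ) {f g : Ω → H} (hf : MemLp f (2 * m + 2 : ℕ) μ)
    (hg : MemLp g (2 * m + 2 : ℕ) μ) :
    Integrable (fun ω => ‖f ω‖ ^ (2 * m) * ⟪f ω, g ω⟫) μ := by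
  have hdom := integrable_norm_pow_mul_norm_pow (j := 2 * m + 1) (k := 1) (by omega) hf hg
  refine hdom.mono' ((hf.1.norm.pow _).mul (hf.1.inner hg.1)) (ae_of_all _ fun ω => ?_)
  calc ‖‖f ω‖ ^ (2 * m) * ⟪f ω, g ω⟫‖ = ‖f ω‖ ^ (2 * m) * ‖⟪f ω, g ω⟫‖ := by simp
    _ ≤ ‖f ω‖ ^ (2 * m) * (‖f ω‖ * ‖g ω‖) := by gcongr; exact norm_inner_le_norm _ _
    _ = ‖f ω‖ ^ (2 * m + 1) * ‖g ω‖ ^ 1 := by ring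

lemma integral_norm_pow_mul_inner_eq_zero [CompleteSpace H] (h𝓂 : 𝓂 ≤ m₀) [SigmaFinite (μ.trim h𝓂)]
    (m : ℕ) {f g : Ω → H}
    (hfm : StronglyMeasurable[𝓂] f) (hf : MemLp f (2 * m + 2 : ℕ) μ)
    (hg : MemLp g (2 * m + 2 : ℕ) μ) (hgi : Integrable g μ) (hcond : μ[g | 𝓂] =ᵐ[μ] 0) :
    ∫ ω, ‖f ω‖ ^ (2 * m) * ⟪f ω, g ω⟫ ∂μ = 0 := by
  have hbilin (ω : Ω) :
      ‖f ω‖ ^ (2 * m) * ⟪f ω, g ω⟫ = innerSL ℝ (‖f ω‖ ^ (2 * m) • f ω) (g ω) := by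
    rw [innerSL_apply_apply, real_inner_smul_left]
  have hint := integrable_norm_pow_mul_inner m hf hg
  simp only [hbilin] at hint ⊢
  have hpull : μ[fun ω => innerSL ℝ (‖f ω‖ ^ (2 * m) • f ω) (g ω) | 𝓂] =ᵐ[μ]
      fun ω => innerSL ℝ (‖f ω‖ ^ (2 * m) • f ω) (μ[g | 𝓂] ω) :=
    condExp_bilin_of_stronglyMeasurable_left (innerSL ℝ)
      ((hfm.norm.pow _).smul hfm) hint hgi
  rw [← integral_condExp h𝓂, integral_congr_ae hpull]
  refine integral_eq_zero_of_ae ?_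
  filter_upwards [hcond] with ω hω
  simp [hω]

lemma lpNorm_add_pow_le_of_integral_eq_zero (m : ℕ) {f g : Ω → H}
    (hf : MemLp f (2 * m + 2 : ℕ) μ) (hg : MemLp g (2 * m + 2 : ℕ) μ)
    (horth : ∫ ω, ‖f ω‖ ^ (2 * m) * ⟪f ω, g ω⟫ ∂μ = 0) :
    lpNorm (f + g) (2 * m + 2 : ℕ) μ ^ (2 * m + 2) ≤ lpNorm f (2 * m + 2 : ℕ) μ ^ (2 * m + 2)
      + (3 * m + 1) * (m + 1) * ((lpNorm f (2 * m + 2 : ℕ) μ + lpNorm g (2 * m + 2 : ℕ) μ) ^ (2 * m)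
        * lpNorm g (2 * m + 2 : ℕ) μ ^ 2) := by
  set h : Ω → ℝ := fun ω => ‖f ω‖ + ‖g ω‖
  have hh_mem : MemLp h (2 * m + 2 : ℕ) μ := hf.norm.add hg.norm
  have hh_norm (ω : Ω) : ‖h ω‖ = ‖f ω‖ + ‖g ω‖ := Real.norm_of_nonneg (by positivity)
  have minkowski : lpNorm h (2 * m + 2 : ℕ) μ
      ≤ lpNorm f (2 * m + 2 : ℕ) μ + lpNorm g (2 * m + 2 : ℕ) μ := by
    rw [← lpNorm_norm hf.1, ← lpNorm_norm hg.1]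
    exact lpNorm_add_le hf.norm (by norm_cast; omega)
  have hfi := hf.integrable_norm_pow (p := 2 * m + 2) (by omega)
  have hinner := (integrable_norm_pow_mul_inner m hf hg).const_mul (2 * (m + 1))
  have hmix := (integrable_norm_pow_mul_norm_pow (by omega) hh_mem hg).const_mul
    ((3 * m + 1 : ℝ) * (m + 1))
  rw [← integral_norm_pow_eq_lpNorm_pow (by omega) (hf.add hg).1]
  calc ∫ ω, ‖(f + g) ω‖ ^ (2 * m + 2) ∂μ
      ≤ ∫ ω, ((‖f ω‖ ^ (2 * m + 2) + 2 * (m + 1) * (‖f ω‖ ^ (2 * m) * ⟪f ω, g ω⟫))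
        + (3 * m + 1) * (m + 1) * (‖h ω‖ ^ (2 * m) * ‖g ω‖ ^ 2)) ∂μ :=
        integral_mono ((hf.add hg).integrable_norm_pow (by omega)) ((hfi.add hinner).add hmix)
          fun ω => by simp only [hh_norm]; exact norm_add_pow_le m (f ω) (g ω)
    _ = lpNorm f (2 * m + 2 : ℕ) μ ^ (2 * m + 2)
        + (3 * m + 1) * (m + 1) * ∫ ω, ‖h ω‖ ^ (2 * m) * ‖g ω‖ ^ 2 ∂μ := by
        rw [integral_add (by exact hfi.add hinner) hmix, integral_add hfi hinner,
          integral_const_mul, integral_const_mul, horth, mul_zero, add_zero,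
          integral_norm_pow_eq_lpNorm_pow (by omega) hf.1]
    _ ≤ _ := by
        have holder := integral_norm_pow_mul_norm_pow_le (by omega) hh_mem hg
        gcongr
        exact holder.trans (by gcongr; exact lpNorm_nonneg)

lemma sq_le_sq_add_of_pow_le {C F G S : ℝ} (hC : 1 ≤ C) (m : ℕ)
    (hS : S ^ (2 * m + 2) ≤ F ^ (2 * m + 2) + C * ((F + G) ^ (2 * m) * G ^ 2)) :
    S ^ 2 ≤ F ^ 2 + C * 2 ^ m * G ^ 2 := by
  have hC' : 1 ≤ C * 2 ^ m := one_le_mul_of_one_le_of_one_le hC (one_le_pow₀ one_le_two)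
  set U := F ^ 2 + C * 2 ^ m * G ^ 2 with hU
  have hFU : F ^ 2 ≤ U := le_add_of_nonneg_right (by positivity)
  have hFGU : (F + G) ^ 2 ≤ 2 * U := by
    nlinarith [sq_nonneg (F - G), mul_le_mul_of_nonneg_right hC' (sq_nonneg G)]
  refine le_of_pow_le_pow_left₀ (n := m + 1) (by omega) (by positivity) ?_
  calc (S ^ 2) ^ (m + 1)
      ≤ F ^ 2 * (F ^ 2) ^ m + C * (((F + G) ^ 2) ^ m * G ^ 2) := by
        rw [← pow_mul, ← pow_mul, ← pow_mul, ← pow_add, add_comm 2]; exact hS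
    _ ≤ F ^ 2 * U ^ m + C * ((2 * U) ^ m * G ^ 2) := by gcongr
    _ = U * U ^ m := by rw [mul_pow, hU]; ring
    _ = U ^ (m + 1) := (pow_succ' U m).symm

lemma lpNorm_add_sq_le_of_condExp_eq_zero [CompleteSpace H] [IsFiniteMeasure μ] (h𝓂 : 𝓂 ≤ m₀)
    (m : ℕ) {f g : Ω → H} (hfm : StronglyMeasurable[𝓂] f) (hf : MemLp f (2 * m + 2 : ℕ) μ)
    (hg : MemLp g (2 * m + 2 : ℕ) μ) (hcond : μ[g | 𝓂] =ᵐ[μ] 0) :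
    lpNorm (f + g) (2 * m + 2 : ℕ) μ ^ 2 ≤ lpNorm f (2 * m + 2 : ℕ) μ ^ 2
      + (3 * m + 1) * (m + 1) * 2 ^ m * lpNorm g (2 * m + 2 : ℕ) μ ^ 2 :=
  sq_le_sq_add_of_pow_le (by nlinarith [Nat.cast_nonneg (α := ℝ) m]) m <|
    lpNorm_add_pow_le_of_integral_eq_zero m hf hg <|
    integral_norm_pow_mul_inner_eq_zero h𝓂 m hfm hf hg (hg.integrable (by norm_cast; omega)) hcond

end MomentInequality

section Recursion

lemma isBigO_of_recursion_le {u v α β γ : ℕ → ℝ} {c : ℝ} (hc : 0 < c) (hu : ∀ n, 0 ≤ u n)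
    (hv : ∀ᶠ n in atTop, 0 < v n) (hα : ∀ᶠ n in atTop, 0 ≤ α n) (hβ : ∀ᶠ n in atTop, 0 ≤ β n)
    (hγ : γ =O[atTop] β) (hu_rec : ∀ᶠ n in atTop, u (n + 1) ≤ α n * u n + γ n)
    (hv_rec : ∀ᶠ n in atTop, α n * v n + c * β n ≤ v (n + 1)) : u =O[atTop] v := by
  obtain ⟨K, hK⟩ := hγ.bound
  obtain ⟨N, hN⟩ := eventually_atTop.1
    (hv.and <| hα.and <| hβ.and <| hK.and <| hu_rec.and hv_rec)
  set D := max (K / c) (u N / v N)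
  have hDu : ∀ n ≥ N, u n ≤ D * v n := by
    intro n hn
    induction n, hn using Nat.le_induction with
    | base => exact (div_le_iff₀ (hN N le_rfl).1).1 (le_max_right _ _)
    | succ n hn ih =>
      obtain ⟨-, hαn, hβn, hKn, hun, hvn⟩ := hN n hn
      have hD : 0 ≤ D := le_max_of_le_right (div_nonneg (hu N) (hN N le_rfl).1.le)
      have hKD : K ≤ D * c := (div_le_iff₀ hc).1 (le_max_left _ _)
      calc u (n + 1) ≤ α n * u n + γ n := hun
        _ ≤ α n * (D * v n) + K * β n := by
            gcongr
            simpa only [Real.norm_of_nonneg hβn] using (le_abs_self _).trans hKn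
        _ ≤ α n * (D * v n) + D * c * β n := by gcongr
        _ = D * (α n * v n + c * β n) := by ring
        _ ≤ D * v (n + 1) := by gcongr
  refine .of_bound D (eventually_atTop.2 ⟨N, fun n hn => ?_⟩)
  rw [Real.norm_of_nonneg (hu n), Real.norm_of_nonneg (hN n hn).1.le]
  exact hDu n hn

lemma add_sq_le_young {x y t : ℝ} (ht : 0 < t) :
    (x + y) ^ 2 ≤ (1 + t) * x ^ 2 + (1 + t⁻¹) * y ^ 2 := by
  have hsq : 0 ≤ t⁻¹ * (t * x - y) ^ 2 := by positivity
  have hexpand : t⁻¹ * (t * x - y) ^ 2 = t * x ^ 2 - 2 * x * y + t⁻¹ * y ^ 2 := by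
    field_simp; ring
  linarith

lemma norm_one_add_div_sq (z : ℂ) {w : ℝ} (hw : w ≠ 0) :
    ‖1 + z / w‖ ^ 2 = 1 + 2 * z.re / w + ‖z‖ ^ 2 / w ^ 2 := by
  rw [Complex.sq_norm, Complex.sq_norm, Complex.normSq_apply, Complex.normSq_apply]
  simp only [Complex.add_re, Complex.one_re, Complex.add_im, Complex.one_im,
    Complex.div_ofReal_re, Complex.div_ofReal_im]
  field_simp
  ring

lemma eq_add_mul_of_add_const {w : ℕ → ℝ} {b : ℝ} (hw : ∀ n, w (n + 1) = w n + b) (n : ℕ) :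
    w n = w 0 + n * b := by
  induction n with
  | zero => simp
  | succ n ih => rw [hw, ih]; push_cast; ring

lemma tendsto_atTop_of_add_const {w : ℕ → ℝ} {b : ℝ} (hb : 0 < b)
    (hw : ∀ n, w (n + 1) = w n + b) : Tendsto w atTop atTop := by
  rw [funext (eq_add_mul_of_add_const hw)]
  exact tendsto_atTop_add_const_left _ _ (tendsto_natCast_atTop_atTop.atTop_mul_const hb)

lemma eventually_norm_one_add_div_sq_mul_le {z : ℂ} {b : ℝ} (hz : z.re < b / 2) :
    ∀ᶠ w : ℝ in atTop, ‖1 + z / w‖ ^ 2 * (1 + (b / 2 - z.re) / w) * w + (b / 2 - z.re) / 2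
      ≤ w + b := by
  set δ := b / 2 - z.re with hδ
  have hδ₀ : 0 < δ := by linarith
  have hlim : Tendsto (fun w : ℝ => ‖z‖ ^ 2 / w + 2 * z.re * δ / w + ‖z‖ ^ 2 * δ / w ^ 2)
      atTop (𝓝 0) := by
    simpa using ((tendsto_id.const_div_atTop (‖z‖ ^ 2)).add
      (tendsto_id.const_div_atTop (2 * z.re * δ))).add
      ((tendsto_pow_atTop two_ne_zero).const_div_atTop (‖z‖ ^ 2 * δ))
  filter_upwards [hlim.eventually_le_const (half_pos hδ₀), eventually_gt_atTop 0] with w hw hw₀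
  have hexpand : ‖1 + z / w‖ ^ 2 * (1 + δ / w) * w
      = w + (2 * z.re + δ) + (‖z‖ ^ 2 / w + 2 * z.re * δ / w + ‖z‖ ^ 2 * δ / w ^ 2) := by
    rw [norm_one_add_div_sq z hw₀.ne']
    field_simp
    ring
  linarith

lemma pow_add_mul_pow_le_log_add_pow {w b : ℝ} (hb : 0 < b) (hw : 1 ≤ w) (m : ℕ) :
    Real.log w ^ (m + 1) + b / (w + b) * Real.log w ^ m ≤ Real.log (w + b) ^ (m + 1) := by
  have hlog : 0 ≤ Real.log w := Real.log_nonneg hw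
  have hgap : Real.log w + b / (w + b) ≤ Real.log (w + b) := by
    have h := Real.one_sub_inv_le_log_of_pos (x := (w + b) / w) (by positivity)
    rw [Real.log_div (by positivity) (by positivity), inv_div, one_sub_div (by positivity),
      add_sub_cancel_left] at h
    linarith
  calc Real.log w ^ (m + 1) + b / (w + b) * Real.log w ^ m
      = (Real.log w + b / (w + b)) * Real.log w ^ m := by ring
    _ ≤ Real.log (w + b) * Real.log (w + b) ^ m := by
        gcongr
        · exact hlog.trans (by gcongr; linarith)
        · linarith
    _ = Real.log (w + b) ^ (m + 1) := by ring

lemma eventually_norm_one_add_div_sq_mul_log_le {z : ℂ} {b : ℝ} (hb : 0 < b) (hz : z.re = b / 2)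
    (m : ℕ) :
    ∀ᶠ w : ℝ in atTop, ‖1 + z / w‖ ^ 2 * (1 + b / 2 / (w * Real.log w))
        * (w * Real.log w ^ (m + 1)) + b / 4 * Real.log w ^ m
      ≤ (w + b) * Real.log (w + b) ^ (m + 1) := by
  have hlog : Tendsto (fun w : ℝ => Real.log w / w) atTop (𝓝 0) := by
    simpa using Real.tendsto_pow_log_div_mul_add_atTop 1 0 1 one_ne_zero
  have hlim : Tendsto (fun w : ℝ => ‖z‖ ^ 2 * (Real.log w / w) + b * (b / 2) / w
      + ‖z‖ ^ 2 * (b / 2) / w ^ 2) atTop (𝓝 0) := by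
    simpa using ((hlog.const_mul (‖z‖ ^ 2)).add
      (tendsto_id.const_div_atTop (b * (b / 2)))).add
      ((tendsto_pow_atTop two_ne_zero).const_div_atTop (‖z‖ ^ 2 * (b / 2)))
  filter_upwards [hlim.eventually_le_const (by positivity : 0 < b / 4), eventually_gt_atTop 1]
    with w hw hw₁
  have hL : 0 < Real.log w := Real.log_pos hw₁
  have hexpand : ‖1 + z / w‖ ^ 2 * (1 + b / 2 / (w * Real.log w)) * (w * Real.log w ^ (m + 1))
      = (w + b) * Real.log w ^ (m + 1) + b / 2 * Real.log w ^ m + (‖z‖ ^ 2 * (Real.log w / w)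
        + b * (b / 2) / w + ‖z‖ ^ 2 * (b / 2) / w ^ 2) * Real.log w ^ m := by
    rw [norm_one_add_div_sq z (by positivity), hz, pow_succ]
    field_simp
    ring
  have hgain : (w + b) * Real.log w ^ (m + 1) + b * Real.log w ^ m
      ≤ (w + b) * Real.log (w + b) ^ (m + 1) := by
    calc _ = (w + b) * (Real.log w ^ (m + 1) + b / (w + b) * Real.log w ^ m) := by field_simp
      _ ≤ _ := by gcongr; exact pow_add_mul_pow_le_log_add_pow hb hw₁.le m
  calc _ ≤ (w + b) * Real.log w ^ (m + 1) + b / 2 * Real.log w ^ m + b / 4 * Real.log w ^ m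
        + b / 4 * Real.log w ^ m := by rw [hexpand]; gcongr
    _ = (w + b) * Real.log w ^ (m + 1) + b * Real.log w ^ m := by ring
    _ ≤ _ := hgain

variable {w : ℕ → ℝ} {b : ℝ} {z : ℂ} {x g : ℕ → ℝ} {C : ℝ}

lemma young_remainder_isBigO {h β : ℕ → ℝ} {c : ℝ} (hc : 0 < c) (hw : ∀ᶠ n in atTop, 0 < w n)
    (hwh : ∀ᶠ n in atTop, c ≤ w n * h n) (hβ : ∀ᶠ n in atTop, 1 ≤ β n)
    (hg : (fun n => g n ^ 2 * h n) =O[atTop] fun n => w n * β n) :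
    (fun n => (1 + (c / (w n * h n))⁻¹) * (g n / w n) ^ 2 + C) =O[atTop] β := by
  refine .add ?_ (.of_bound |C| ?_)
  · refine .trans (.of_bound (2 / c) (g := fun n => (w n)⁻¹ * (g n ^ 2 * h n)) ?_)
      (((Asymptotics.isBigO_refl (fun n => (w n)⁻¹) _).mul hg).congr' .rfl ?_)
    · filter_upwards [hw, hwh] with n hwn hwhn
      have hhn : 0 < h n := pos_of_mul_pos_right (hc.trans_le hwhn) hwn.le
      rw [Real.norm_of_nonneg (by positivity), Real.norm_of_nonneg (by positivity), inv_div]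
      calc (1 + w n * h n / c) * (g n / w n) ^ 2
          ≤ (w n * h n / c + w n * h n / c) * (g n / w n) ^ 2 := by
            gcongr
            exact (one_le_div hc).2 hwhn
        _ = 2 / c * ((w n)⁻¹ * (g n ^ 2 * h n)) := by field_simp; ring
    · filter_upwards [hw] with n hwn using inv_mul_cancel_left₀ hwn.ne' _
  · filter_upwards [hβ] with n hn
    exact le_mul_of_one_le_right (abs_nonneg C) (hn.trans (le_abs_self _))

-- Young's inequality splits the square with parameter `c / (w * h w)`.
lemma sq_isBigO_of_supersolution {c d : ℝ} {h v β : ℝ → ℝ} (hb : 0 < b)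
    (hw : ∀ n, w (n + 1) = w n + b) (hc : 0 < c) (hd : 0 < d) (hh : ∀ᶠ y in atTop, 1 ≤ h y)
    (hv : ∀ᶠ y in atTop, 0 < v y) (hβ : ∀ᶠ y in atTop, 1 ≤ β y)
    (hv_rec : ∀ᶠ y : ℝ in atTop,
      ‖1 + z / y‖ ^ 2 * (1 + c / (y * h y)) * v y + d * β y ≤ v (y + b))
    (hg : (fun n => g n ^ 2 * h (w n)) =O[atTop] fun n => w n * β (w n))
    (hrec : ∀ᶠ n in atTop, x (n + 1) ^ 2 ≤ (‖1 + z / w n‖ * x n + g n / w n) ^ 2 + C) :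
    (fun n => x n ^ 2) =O[atTop] fun n => v (w n) := by
  have hw_top := tendsto_atTop_of_add_const hb hw
  have hw_pos := hw_top.eventually_gt_atTop 0
  have hwh : ∀ᶠ n in atTop, c ≤ w n * h (w n) := by
    filter_upwards [hw_pos, hw_top.eventually_ge_atTop c, hw_top.eventually hh] with n h₀ hcn hhn
    exact hcn.trans (le_mul_of_one_le_right h₀.le hhn)
  refine isBigO_of_recursion_le hd (fun n => sq_nonneg _) (hw_top.eventually hv)
    (α := fun n => ‖1 + z / w n‖ ^ 2 * (1 + c / (w n * h (w n)))) ?_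
    ((hw_top.eventually hβ).mono fun n hn => zero_le_one.trans hn)
    (young_remainder_isBigO (C := C) hc hw_pos hwh (hw_top.eventually hβ) hg) ?_ ?_
  · filter_upwards [hwh] with n hn
    have : 0 < w n * h (w n) := hc.trans_le hn
    positivity
  · filter_upwards [hrec, hwh] with n hn hwhn
    have hyoung := add_sq_le_young (x := ‖1 + z / w n‖ * x n) (y := g n / w n)
      (div_pos hc (hc.trans_le hwhn))
    linarith
  · filter_upwards [hw_top.eventually hv_rec] with n hn
    rwa [hw]

lemma sq_isBigO_of_re_lt (hb : 0 < b) (hw : ∀ n, w (n + 1) = w n + b) (hz : z.re < b / 2)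
    (hg : (fun n => g n ^ 2) =O[atTop] w)
    (hrec : ∀ᶠ n in atTop, x (n + 1) ^ 2 ≤ (‖1 + z / w n‖ * x n + g n / w n) ^ 2 + C) :
    (fun n => x n ^ 2) =O[atTop] w :=
  sq_isBigO_of_supersolution (h := fun _ => 1) (β := fun _ => 1) (v := id) hb hw (sub_pos.2 hz)
    (half_pos (sub_pos.2 hz)) (by simp) (eventually_gt_atTop 0) (by simp)
    (by simpa using eventually_norm_one_add_div_sq_mul_le hz) (by simpa using hg) hrec

lemma sq_isBigO_of_re_eq (hb : 0 < b) (hw : ∀ n, w (n + 1) = w n + b) (hz : z.re = b / 2) (m : ℕ)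
    (hg : (fun n => g n ^ 2 * Real.log (w n)) =O[atTop] fun n => w n * Real.log (w n) ^ m)
    (hrec : ∀ᶠ n in atTop, x (n + 1) ^ 2 ≤ (‖1 + z / w n‖ * x n + g n / w n) ^ 2 + C) :
    (fun n => x n ^ 2) =O[atTop] fun n => w n * Real.log (w n) ^ (m + 1) := by
  have hlog : ∀ᶠ y in atTop, 1 ≤ Real.log y := Real.tendsto_log_atTop.eventually_ge_atTop 1
  refine sq_isBigO_of_supersolution (h := Real.log) (β := fun y => Real.log y ^ m)
    (v := fun y => y * Real.log y ^ (m + 1)) hb hw (half_pos hb) (by positivity) hlog ?_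
    (hlog.mono fun y hy => one_le_pow₀ hy)
    (eventually_norm_one_add_div_sq_mul_log_le hb hz m) hg hrec
  filter_upwards [hlog, eventually_gt_atTop 0] with y hy hy₀
  positivity

end Recursion

section SpectralRecursion

variable {V : Type*} [AddCommGroup V] [Module ℂ V] {S : Module.End ℂ V} {s : ℕ → Seminorm ℂ V}
  {w : ℕ → ℝ} {b : ℝ} {z : ℂ} {v : V}

lemma seminorm_add_inv_smul_le (p : Seminorm ℂ V) (S : Module.End ℂ V) (z : ℂ) {y : ℝ} (hy : 0 < y)
    (v : V) :
    p (v + (y : ℂ)⁻¹ • S v) ≤ ‖1 + z / y‖ * p v + p ((S - z • 1) v) / y := by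
  have hsplit : v + (y : ℂ)⁻¹ • S v = (1 + z / y) • v + (y : ℂ)⁻¹ • (S - z • 1) v := by
    simp only [LinearMap.sub_apply, LinearMap.smul_apply, Module.End.one_apply]
    module
  calc p (v + (y : ℂ)⁻¹ • S v)
      ≤ p ((1 + z / y) • v) + p ((y : ℂ)⁻¹ • (S - z • 1) v) := hsplit ▸ map_add_le_add p _ _
    _ = ‖1 + z / y‖ * p v + p ((S - z • 1) v) / y := by
        rw [map_smul_eq_mul, map_smul_eq_mul, norm_inv, Complex.norm_of_nonneg hy.le,
          inv_mul_eq_div]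

lemma eventually_seminorm_sq_le (hb : 0 < b) (hw : ∀ n, w (n + 1) = w n + b)
    (hrec : ∃ C, ∀ᶠ n in atTop, s (n + 1) v ^ 2 ≤ s n (v + (w n : ℂ)⁻¹ • S v) ^ 2 + C) (z : ℂ) :
    ∃ C, ∀ᶠ n in atTop,
      s (n + 1) v ^ 2 ≤ (‖1 + z / w n‖ * s n v + s n ((S - z • 1) v) / w n) ^ 2 + C := by
  obtain ⟨C, hC⟩ := hrec
  refine ⟨C, ?_⟩
  filter_upwards [hC, (tendsto_atTop_of_add_const hb hw).eventually_gt_atTop 0] with n hn hwn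
  refine hn.trans ?_
  gcongr
  exact seminorm_add_inv_smul_le (s n) S z hwn v

lemma seminorm_sq_isBigO_of_re_lt (hb : 0 < b) (hw : ∀ n, w (n + 1) = w n + b)
    (hrec : ∀ v, ∃ C, ∀ᶠ n in atTop, s (n + 1) v ^ 2 ≤ s n (v + (w n : ℂ)⁻¹ • S v) ^ 2 + C)
    (hz : z.re < b / 2) (hv : v ∈ S.maxGenEigenspace z) :
    (fun n => s n v ^ 2) =O[atTop] w := by
  obtain ⟨k, hk⟩ := (Module.End.mem_maxGenEigenspace S z v).1 hv
  induction k generalizing v with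
  | zero =>
    obtain rfl : v = 0 := by simpa using hk
    simpa using Asymptotics.isBigO_zero w atTop
  | succ k ih =>
    obtain ⟨C, hC⟩ := eventually_seminorm_sq_le hb hw (hrec v) z
    have hlayer : ((S - z • 1) ^ k) ((S - z • 1) v) = 0 := by
      rw [← Module.End.mul_apply, ← pow_succ, hk]
    exact sq_isBigO_of_re_lt hb hw hz
      (ih ((Module.End.mem_maxGenEigenspace S z _).2 ⟨k, hlayer⟩) hlayer) hC

-- Each Jordan level costs two powers of the logarithm: one from the resonance, one from the
-- coupling to the level below.
lemma seminorm_sq_isBigO_of_re_eq (hb : 0 < b) (hw : ∀ n, w (n + 1) = w n + b)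
    (hrec : ∀ v, ∃ C, ∀ᶠ n in atTop, s (n + 1) v ^ 2 ≤ s n (v + (w n : ℂ)⁻¹ • S v) ^ 2 + C)
    (hz : z.re = b / 2) {k : ℕ} (hv : v ∈ S.genEigenspace z (k + 1 : ℕ)) :
    (fun n => s n v ^ 2) =O[atTop] fun n => w n * Real.log (w n) ^ (2 * k + 1) := by
  induction k generalizing v with
  | zero =>
    obtain ⟨C, hC⟩ := eventually_seminorm_sq_le hb hw (hrec v) z
    have hlayer : (S - z • 1) v = 0 := by
      simpa [Module.End.mem_genEigenspace_nat, sub_eq_zero] using hv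
    exact sq_isBigO_of_re_eq hb hw hz 0 (by simpa [hlayer] using Asymptotics.isBigO_zero _ _) hC
  | succ k ih =>
    obtain ⟨C, hC⟩ := eventually_seminorm_sq_le hb hw (hrec v) z
    have hlayer : (S - z • 1) v ∈ S.genEigenspace z (k + 1 : ℕ) := by
      rw [Module.End.mem_genEigenspace_nat, LinearMap.mem_ker] at hv ⊢
      rw [← Module.End.mul_apply, ← pow_succ, hv]
    refine sq_isBigO_of_re_eq hb hw hz (2 * k + 2) ?_ hC
    refine ((ih hlayer).mul (Asymptotics.isBigO_refl (fun n => Real.log (w n)) _)).congr_right ?_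
    exact fun n => by ring

lemma seminorm_sq_isBigO [FiniteDimensional ℂ V] {ν : ℕ} (hb : 0 < b)
    (hw : ∀ n, w (n + 1) = w n + b)
    (hrec : ∀ v, ∃ C, ∀ᶠ n in atTop, s (n + 1) v ^ 2 ≤ s n (v + (w n : ℂ)⁻¹ • S v) ^ 2 + C)
    (hspec : ∀ z : ℂ, z.re < b / 2 ∨
      (z.re = b / 2 ∧ S.maxGenEigenspace z ≤ S.genEigenspace z (ν + 1 : ℕ)) ∨
      ∀ v ∈ S.maxGenEigenspace z, ∀ n, s n v = 0) (v : V) :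
    (fun n => s n v ^ 2) =O[atTop] fun n => w n * Real.log (w n) ^ (2 * ν + 1) := by
  have hw_top := tendsto_atTop_of_add_const hb hw
  have hv : v ∈ ⨆ z, S.maxGenEigenspace z := by
    rw [Module.End.iSup_maxGenEigenspace_eq_top]; trivial
  induction hv using Submodule.iSup_induction' with
  | mem z v hv =>
    obtain hz | ⟨hz, hle⟩ | hzero := hspec z
    · refine (seminorm_sq_isBigO_of_re_lt hb hw hrec hz hv).trans (.of_bound 1 ?_)
      have hlog := (Real.tendsto_log_atTop.comp hw_top).eventually_ge_atTop 1
      filter_upwards [hlog] with n hn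
      rw [one_mul, norm_mul]
      exact le_mul_of_one_le_right (norm_nonneg _) ((one_le_pow₀ hn).trans (le_abs_self _))
    · exact seminorm_sq_isBigO_of_re_eq hb hw hrec hz (hle hv)
    · simpa [hzero v hv] using Asymptotics.isBigO_zero _ _
  | zero => simpa using Asymptotics.isBigO_zero _ _
  | add v₁ v₂ _ _ ih₁ ih₂ =>
    refine .trans (.of_bound 2 (.of_forall fun n => ?_)) (ih₁.add ih₂)
    rw [Real.norm_of_nonneg (by positivity), Real.norm_of_nonneg (by positivity)]
    calc s n (v₁ + v₂) ^ 2 ≤ (s n v₁ + s n v₂) ^ 2 := by gcongr; exact map_add_le_add _ _ _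
      _ ≤ 2 * (s n v₁ ^ 2 + s n v₂ ^ 2) := add_sq_le

end SpectralRecursion

section SpectralProjection

variable {n K : Type*} [Fintype n] [DecidableEq n] [Field K]

lemma toLin'_sub_smul_one_pow (A : Matrix n n K) (z : K) (k : ℕ) :
    (toLin' A - z • 1) ^ k = toLin' ((A - z • 1) ^ k) := by
  rw [toLin'_pow, map_sub, map_smul, toLin'_one]
  rfl

lemma mem_genEigenspace_toLin'_iff {A : Matrix n n K} {z : K} {k : ℕ} {v : n → K} :
    v ∈ Module.End.genEigenspace (toLin' A) z k ↔ ((A - z • 1) ^ k) *ᵥ v = 0 := by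
  rw [Module.End.mem_genEigenspace_nat, toLin'_sub_smul_one_pow, LinearMap.mem_ker, toLin'_apply]

lemma finrank_genEigenspace_toLin'_transpose (A : Matrix n n K) (z : K) (k : ℕ) :
    Module.finrank K (Module.End.genEigenspace (toLin' Aᵀ) z k) =
      Module.finrank K (Module.End.genEigenspace (toLin' A) z k) := by
  have rank_add_finrank (B : Matrix n n K) :
      ((B - z • 1) ^ k).rank + Module.finrank K (Module.End.genEigenspace (toLin' B) z k) =
        Fintype.card n := by
    rw [Module.End.genEigenspace_nat, toLin'_sub_smul_one_pow, rank, ← toLin'_apply',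
      LinearMap.finrank_range_add_finrank_ker, Module.finrank_fintype_fun_eq_card]
  have hrank : ((Aᵀ - z • 1) ^ k).rank = ((A - z • 1) ^ k).rank := by
    rw [← rank_transpose ((A - z • 1) ^ k), transpose_pow, transpose_sub, transpose_smul,
      transpose_one]
  have hA := rank_add_finrank A
  have hAt := rank_add_finrank Aᵀ
  lia

lemma isCompl_maxGenEigenspace_iSup {V : Type*} [AddCommGroup V] [Module K V] [IsAlgClosed K]
    [FiniteDimensional K V] (f : Module.End K V) (z : K) :
    IsCompl (f.maxGenEigenspace z) (⨆ z' ≠ z, f.maxGenEigenspace z') :=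
  ⟨f.independent_maxGenEigenspace z, codisjoint_iff.2 <|
    (iSup_split_single _ z).symm.trans f.iSup_maxGenEigenspace_eq_top⟩

variable {q : ℕ} {A : Matrix (Fin q) (Fin q) ℂ} {z : ℂ}

lemma mem_maxGenEigenspace_toLin'_iff {v : Fin q → ℂ} :
    v ∈ Module.End.maxGenEigenspace (toLin' A) z ↔ ((A - z • 1) ^ q) *ᵥ v = 0 := by
  rw [Module.End.maxGenEigenspace_eq_genEigenspace_finrank, Module.finrank_fin_fun,
    mem_genEigenspace_toLin'_iff]

lemma exists_isSpectralProj (A : Matrix (Fin q) (Fin q) ℂ) (z : ℂ) :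
    ∃ P, IsSpectralProj A z P := by
  have hcompl := isCompl_maxGenEigenspace_iSup (toLin' A) z
  refine ⟨LinearMap.toMatrix' (Submodule.projection _ _ hcompl), fun v hv => ?_,
    fun z' hz' v hv => ?_⟩ <;> rw [LinearMap.toMatrix'_mulVec]
  · exact Submodule.projection_apply_of_mem_left _ (mem_maxGenEigenspace_toLin'_iff.2 hv)
  · exact (Submodule.projection_apply_eq_zero_iff _).2 <|
      Submodule.mem_iSup_of_mem z' <| Submodule.mem_iSup_of_mem hz' <|
      mem_maxGenEigenspace_toLin'_iff.2 hv

namespace IsSpectralProj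

variable {P : Matrix (Fin q) (Fin q) ℂ} {v : Fin q → ℂ}

lemma nilpotentPart_pow_mulVec (hP : IsSpectralProj A z P) (k : ℕ)
    (hv : v ∈ Module.End.maxGenEigenspace (toLin' A) z) :
    ((A - z • 1) * P) ^ k *ᵥ v = (A - z • 1) ^ k *ᵥ v := by
  induction k generalizing v with
  | zero => simp
  | succ k ih =>
    have hv' : (A - z • 1) *ᵥ v ∈ Module.End.maxGenEigenspace (toLin' A) z := by
      rw [mem_maxGenEigenspace_toLin'_iff] at hv ⊢
      rw [mulVec_mulVec, ← pow_succ, pow_succ', ← mulVec_mulVec, hv, mulVec_zero]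
    rw [pow_succ, pow_succ, ← mulVec_mulVec, ← mulVec_mulVec, ← mulVec_mulVec,
      hP.1 v (mem_maxGenEigenspace_toLin'_iff.1 hv), ih hv']

lemma isNilpotent_nilpotentPart (hP : IsSpectralProj A z P) :
    IsNilpotent ((A - z • 1) * P) := by
  refine ⟨q + 1, toLin'.injective <| LinearMap.ext fun v => ?_⟩
  rw [toLin'_apply, map_zero, LinearMap.zero_apply]
  have hv : v ∈ ⨆ z', Module.End.maxGenEigenspace (toLin' A) z' := by
    rw [Module.End.iSup_maxGenEigenspace_eq_top]; trivial
  induction hv using Submodule.iSup_induction' with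
  | zero => exact mulVec_zero _
  | add v v' _ _ hv hv' => rw [mulVec_add, hv, hv', add_zero]
  | mem z' v hv =>
    rcases eq_or_ne z' z with rfl | hz'
    · rw [hP.nilpotentPart_pow_mulVec _ hv, pow_succ', ← mulVec_mulVec,
        mem_maxGenEigenspace_toLin'_iff.1 hv, mulVec_zero]
    · rw [pow_succ, ← mulVec_mulVec, ← mulVec_mulVec,
        hP.2 z' hz' v (mem_maxGenEigenspace_toLin'_iff.1 hv), mulVec_zero, mulVec_zero]

lemma exists_nilIndexOf (hP : IsSpectralProj A z P) : ∃ k, NilIndexOf A z P k := by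
  classical
  have h : ∃ k, ((A - z • 1) * P) ^ (k + 1) = 0 :=
    hP.isNilpotent_nilpotentPart.imp fun k hk => by rw [pow_succ, hk, zero_mul]
  refine ⟨Nat.find h, Nat.find_spec h, ?_⟩
  rcases hk : Nat.find h with _ | k
  · exact .inl rfl
  · exact .inr (Nat.find_min h (by lia))

lemma maxGenEigenspace_le_of_nilIndexOf_le (hP : IsSpectralProj A z P) {ν : ℕ}
    (hν : ∀ k, NilIndexOf A z P k → k ≤ ν) :
    Module.End.maxGenEigenspace (toLin' A) z ≤
      Module.End.genEigenspace (toLin' A) z (ν + 1 : ℕ) := by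
  obtain ⟨k, hk⟩ := hP.exists_nilIndexOf
  intro v hv
  rw [mem_genEigenspace_toLin'_iff, ← hP.nilpotentPart_pow_mulVec _ hv,
    pow_eq_zero_of_le (Nat.succ_le_succ (hν k hk)) hk.1, zero_mulVec]

end IsSpectralProj

lemma maxGenEigenspace_toLin'_transpose_le_genEigenspace {k : ℕ}
    (h : Module.End.maxGenEigenspace (toLin' A) z ≤ Module.End.genEigenspace (toLin' A) z k) :
    Module.End.maxGenEigenspace (toLin' Aᵀ) z ≤ Module.End.genEigenspace (toLin' Aᵀ) z k := by
  refine (Submodule.eq_of_le_of_finrank_le (Module.End.genEigenspace_le_maximal ..) ?_).ge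
  rw [finrank_genEigenspace_toLin'_transpose]
  refine le_of_eq_of_le ?_ (Submodule.finrank_mono h)
  rw [Module.End.maxGenEigenspace_eq_genEigenspace_finrank,
    finrank_genEigenspace_toLin'_transpose, ← Module.End.maxGenEigenspace_eq_genEigenspace_finrank]

lemma maxGenEigenspace_toLin'_transpose_le_span {b : ℝ} {a : Fin q → ℂ} (ha : a ≠ 0)
    (hab : Aᵀ *ᵥ a = (b : ℂ) • a) (hz : ¬ MemSecondEigSet A b z) :
    Module.End.maxGenEigenspace (toLin' Aᵀ) z ≤ ℂ ∙ a := by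
  rw [MemSecondEigSet, not_or] at hz
  have hfin : Module.finrank ℂ (Module.End.maxGenEigenspace (toLin' Aᵀ) z) =
      A.charpoly.rootMultiplicity z := by
    rw [LinearMap.finrank_maxGenEigenspace_eq, charpoly_toLin', charpoly_transpose]
  rcases eq_or_ne z b with rfl | hzb
  · have ha' : ℂ ∙ a ≤ Module.End.maxGenEigenspace (toLin' Aᵀ) (b : ℂ) := by
      rw [Submodule.span_singleton_le_iff_mem]
      exact Module.End.genEigenspace_le_maximal _ _ 1 (Module.End.mem_eigenspace_iff.2 hab)
    refine (Submodule.eq_of_le_of_finrank_le ha' ?_).ge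
    rw [hfin, finrank_span_singleton ha]
    by_contra! h
    exact hz.2 ⟨rfl, h⟩
  · have hroot : ¬ A.charpoly.IsRoot z := fun h =>
      hz.1 ⟨hzb, mem_spectrum_iff_isRoot_charpoly.2 h⟩
    rw [Polynomial.rootMultiplicity_eq_zero hroot, Submodule.finrank_eq_zero] at hfin
    exact hfin ▸ bot_le

/-- The candidates for the second eigenvalue have real part at most `b / 2`, and `ν` bounds the
nilpotency indices of those on the critical line `re z = b / 2`. -/
structure SecondSpectrumBound (A : Matrix (Fin q) (Fin q) ℂ) (b : ℝ) (ν : ℕ) : Prop where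
  re_le : ∀ z, MemSecondEigSet A b z → z.re ≤ b / 2
  nilIndex_le : ∀ z P k, MemSecondEigSet A b z → z.re = b / 2 → IsSpectralProj A z P →
    NilIndexOf A z P k → k ≤ ν

lemma SecondSpectrumBound.trichotomy_transpose {b : ℝ} {ν : ℕ} (h : SecondSpectrumBound A b ν)
    {a : Fin q → ℂ} (ha : a ≠ 0) (hab : Aᵀ *ᵥ a = (b : ℂ) • a) (z : ℂ) :
    z.re < b / 2 ∨ (z.re = b / 2 ∧ Module.End.maxGenEigenspace (toLin' Aᵀ) z ≤
      Module.End.genEigenspace (toLin' Aᵀ) z (ν + 1 : ℕ)) ∨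
      Module.End.maxGenEigenspace (toLin' Aᵀ) z ≤ ℂ ∙ a := by
  by_cases hz : MemSecondEigSet A b z
  · refine (h.re_le z hz).lt_or_eq.imp_right fun hzre => .inl ⟨hzre, ?_⟩
    obtain ⟨P, hP⟩ := exists_isSpectralProj A z
    exact maxGenEigenspace_toLin'_transpose_le_genEigenspace <|
      hP.maxGenEigenspace_le_of_nilIndexOf_le fun k => h.nilIndex_le z P k hz hzre hP
  · exact .inr (.inr (maxGenEigenspace_toLin'_transpose_le_span ha hab hz))

end SpectralProjection

section LinearDrift

variable {Ω E : Type*} {m₀ : MeasurableSpace Ω} {μ : Measure Ω} {X : ℕ → Ω → E} {p : ℝ≥0∞}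
  [NormedAddCommGroup E]

lemma lpNorm_le_of_increment_le (hp : 1 ≤ p) (hX : ∀ n, MemLp (X n) p μ) {M : ℝ}
    (hM : ∀ n, lpNorm (fun ω => X (n + 1) ω - X n ω) p μ ≤ M) (n : ℕ) :
    lpNorm (X n) p μ ≤ lpNorm (X 0) p μ + n * M := by
  induction n with
  | zero => simp
  | succ n ih =>
    have hadd := lpNorm_add_le (hX n) hp (g := fun ω => X (n + 1) ω - X n ω)
    have hsucc : X n + (fun ω => X (n + 1) ω - X n ω) = X (n + 1) := by ext ω; simp
    rw [hsucc] at hadd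
    push_cast
    linarith [hM n]

variable [NormedSpace ℝ E] {T : E →L[ℝ] E} {w : ℕ → ℝ}

/-- The process `X` is adapted and integrable, and the conditional mean of its increment at
time `n` is `T (X n) / w n`: the moment structure of a balanced urn with intensity matrix `T` and
total activity `w n` after `n` draws. -/
structure HasLinearDrift (ℱ : Filtration ℕ m₀) (μ : Measure Ω) (T : E →L[ℝ] E) (w : ℕ → ℝ)
    (X : ℕ → Ω → E) : Prop where
  weight_ne_zero : ∀ n, w n ≠ 0
  stronglyAdapted : StronglyAdapted ℱ X
  integrable : ∀ n, Integrable (X n) μ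
  condExp_increment : ∀ n, μ[fun ω => X (n + 1) ω - X n ω | ℱ n] =ᵐ[μ]
    fun ω => (w n)⁻¹ • T (X n ω)

/-- The process `X n - E (X n)`. -/
noncomputable def centered (μ : Measure Ω) (X : ℕ → Ω → E) (n : ℕ) (ω : Ω) : E :=
  X n ω - ∫ ω', X n ω' ∂μ

/-- The deviation of the increment at time `n` from its linear prediction `T (X n) / w n`. -/
noncomputable def innovation (T : E →L[ℝ] E) (w : ℕ → ℝ) (X : ℕ → Ω → E) (n : ℕ) (ω : Ω) : E :=
  X (n + 1) ω - X n ω - (w n)⁻¹ • T (X n ω)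

lemma memLp_centered [IsFiniteMeasure μ] (hX : ∀ n, MemLp (X n) p μ) (n : ℕ) :
    MemLp (centered μ X n) p μ :=
  (hX n).sub (memLp_const _)

lemma memLp_innovation (hX : ∀ n, MemLp (X n) p μ) (n : ℕ) :
    MemLp (innovation T w X n) p μ :=
  ((hX (n + 1)).sub (hX n)).sub ((T.comp_memLp' (hX n)).const_smul _)

lemma lpNorm_clm_comp_le {F : Type*} [NormedAddCommGroup F] [NormedSpace ℝ F] (L : E →L[ℝ] F)
    {f : Ω → E} (hf : MemLp f p μ) : lpNorm (fun ω => L (f ω)) p μ ≤ ‖L‖ * lpNorm f p μ :=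
  calc lpNorm (fun ω => L (f ω)) p μ
      ≤ lpNorm (‖L‖ • fun ω => ‖f ω‖) p μ :=
        lpNorm_mono_real (hf.norm.const_smul ‖L‖) fun ω => L.le_opNorm (f ω)
    _ = ‖L‖ * lpNorm f p μ := by
        rw [lpNorm_const_smul, lpNorm_norm hf.1, nnnorm_norm, coe_nnnorm]

lemma exists_eventually_lpNorm_innovation_le (hp : 1 ≤ p) {b : ℝ} (hb : 0 < b)
    (hw : ∀ n, w (n + 1) = w n + b) (hX : ∀ n, MemLp (X n) p μ) {M : ℝ}
    (hM : ∀ n, lpNorm (fun ω => X (n + 1) ω - X n ω) p μ ≤ M) :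
    ∃ C, ∀ᶠ n in atTop, lpNorm (innovation T w X n) p μ ≤ C := by
  have hM0 : 0 ≤ M := lpNorm_nonneg.trans (hM 0)
  refine ⟨M + ‖T‖ * (lpNorm (X 0) p μ + 2 * M / b), ?_⟩
  have hw_top := tendsto_atTop_of_add_const hb hw
  filter_upwards [hw_top.eventually_ge_atTop 1, hw_top.eventually_ge_atTop (-w 0)] with n hn₁ hn₀
  have hn_le : n ≤ 2 * w n / b := by
    rw [le_div_iff₀ hb]
    linarith [eq_add_mul_of_add_const hw n]
  have hXn : lpNorm (X n) p μ ≤ w n * (lpNorm (X 0) p μ + 2 * M / b) :=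
    calc lpNorm (X n) p μ ≤ lpNorm (X 0) p μ + n * M := lpNorm_le_of_increment_le hp hX hM n
      _ ≤ w n * lpNorm (X 0) p μ + 2 * w n / b * M := by
        gcongr
        exact le_mul_of_one_le_left lpNorm_nonneg hn₁
      _ = w n * (lpNorm (X 0) p μ + 2 * M / b) := by ring
  calc lpNorm (innovation T w X n) p μ
      ≤ lpNorm (fun ω => X (n + 1) ω - X n ω) p μ + lpNorm ((w n)⁻¹ • fun ω => T (X n ω)) p μ :=
        lpNorm_sub_le ((hX (n + 1)).sub (hX n)) hp
    _ = lpNorm (fun ω => X (n + 1) ω - X n ω) p μ +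
          (w n)⁻¹ * lpNorm (fun ω => T (X n ω)) p μ := by
        rw [lpNorm_const_smul, coe_nnnorm, Real.norm_of_nonneg (by positivity)]
    _ ≤ M + (w n)⁻¹ * (‖T‖ * (w n * (lpNorm (X 0) p μ + 2 * M / b))) := by
        gcongr
        · exact hM n
        · exact (lpNorm_clm_comp_le T (hX n)).trans (by gcongr)
    _ = M + ‖T‖ * (lpNorm (X 0) p μ + 2 * M / b) := by field_simp

namespace HasLinearDrift

variable {ℱ : Filtration ℕ m₀} [CompleteSpace E]

lemma condExp_innovation [IsFiniteMeasure μ] (h : HasLinearDrift ℱ μ T w X) (n : ℕ) :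
    μ[innovation T w X n | ℱ n] =ᵐ[μ] 0 := by
  have hdrift_int : Integrable (fun ω => (w n)⁻¹ • T (X n ω)) μ :=
    (T.integrable_comp (h.integrable n)).smul _
  have hdrift : μ[fun ω => (w n)⁻¹ • T (X n ω) | ℱ n] = fun ω => (w n)⁻¹ • T (X n ω) :=
    condExp_of_stronglyMeasurable (ℱ.le n)
      ((T.continuous.comp_stronglyMeasurable (h.stronglyAdapted n)).const_smul _) hdrift_int
  refine (condExp_sub ((h.integrable (n + 1)).sub (h.integrable n)) hdrift_int (ℱ n)).trans ?_
  filter_upwards [h.condExp_increment n] with ω hω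
  rw [Pi.sub_apply, hdrift, Pi.zero_apply, sub_eq_zero]
  exact hω

lemma integral_succ [IsFiniteMeasure μ] (h : HasLinearDrift ℱ μ T w X) (n : ℕ) :
    ∫ ω, X (n + 1) ω ∂μ = ∫ ω, X n ω ∂μ + (w n)⁻¹ • T (∫ ω, X n ω ∂μ) := by
  rw [← sub_eq_iff_eq_add', ← integral_sub (h.integrable _) (h.integrable _),
    ← integral_condExp (ℱ.le n), integral_congr_ae (h.condExp_increment n), integral_smul,
    T.integral_comp_comm (h.integrable n)]

lemma centered_succ [IsFiniteMeasure μ] (h : HasLinearDrift ℱ μ T w X) (n : ℕ) (ω : Ω) :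
    centered μ X (n + 1) ω =
      centered μ X n ω + (w n)⁻¹ • T (centered μ X n ω) + innovation T w X n ω := by
  simp only [centered, innovation, h.integral_succ n, map_sub, smul_sub]
  abel

lemma exists_eventually_lpNorm_clm_centered_sq_le [IsFiniteMeasure μ]
    (h : HasLinearDrift ℱ μ T w X) (m : ℕ)
    (hX : ∀ n, MemLp (X n) (2 * m + 2 : ℕ) μ) {C : ℝ}
    (hC : ∀ᶠ n in atTop, lpNorm (innovation T w X n) (2 * m + 2 : ℕ) μ ≤ C)
    {H : Type*} [NormedAddCommGroup H] [InnerProductSpace ℝ H] [CompleteSpace H]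
    (φ : E →L[ℝ] H) :
    ∃ C', ∀ᶠ n in atTop, lpNorm (fun ω => φ (centered μ X (n + 1) ω)) (2 * m + 2 : ℕ) μ ^ 2 ≤
      lpNorm (fun ω => (φ + (w n)⁻¹ • φ ∘L T) (centered μ X n ω)) (2 * m + 2 : ℕ) μ ^ 2 + C' := by
  refine ⟨(3 * m + 1) * (m + 1) * 2 ^ m * (‖φ‖ * C) ^ 2, hC.mono fun n hn => ?_⟩
  have hξ := memLp_innovation (T := T) (w := w) hX n
  have hsplit : (fun ω => φ (centered μ X (n + 1) ω)) =
      (fun ω => (φ + (w n)⁻¹ • φ ∘L T) (centered μ X n ω)) +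
        fun ω => φ (innovation T w X n ω) := by
    ext ω
    simp [h.centered_succ n ω]
  have hadapted : StronglyMeasurable[ℱ n] (centered μ X n) :=
    (h.stronglyAdapted n).sub stronglyMeasurable_const
  have hcond : μ[fun ω => φ (innovation T w X n ω) | ℱ n] =ᵐ[μ] 0 := by
    refine (φ.comp_condExp_comm (hξ.integrable (by norm_cast; omega))).symm.trans ?_
    filter_upwards [h.condExp_innovation n] with ω hω
    simp [hω]
  rw [hsplit]
  refine (lpNorm_add_sq_le_of_condExp_eq_zero (ℱ.le n) m
    ((φ + (w n)⁻¹ • φ ∘L T).continuous.comp_stronglyMeasurable hadapted)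
    ((φ + (w n)⁻¹ • φ ∘L T).comp_memLp' (memLp_centered hX n)) (φ.comp_memLp' hξ) hcond).trans ?_
  gcongr
  · exact lpNorm_nonneg
  · exact (lpNorm_clm_comp_le φ hξ).trans (by gcongr)

end HasLinearDrift

end LinearDrift

section FunctionalSeminorm

variable {Ω E : Type*} {m₀ : MeasurableSpace Ω} {μ : Measure Ω} {p : ℝ≥0∞}
  [NormedAddCommGroup E] [NormedSpace ℝ E]

/-- The `L^p` norm of `φ ∘ f`, as a seminorm in the complex-valued functional `φ`. -/
noncomputable def functionalSeminorm {f : Ω → E} (hf : MemLp f p μ) (hp : 1 ≤ p) :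
    Seminorm ℂ (E →L[ℝ] ℂ) :=
  Seminorm.of (fun φ => lpNorm (fun ω => φ (f ω)) p μ)
    (fun φ _ => lpNorm_add_le (φ.comp_memLp' hf) hp)
    (fun c φ => lpNorm_const_smul c (fun ω => φ (f ω)) μ)

lemma lpNorm_clm_centered_eq_zero [IsProbabilityMeasure μ] [CompleteSpace E] {X : ℕ → Ω → E}
    (hX : ∀ n, MemLp (X n) p μ) (hp : 1 ≤ p) {φ : E →L[ℝ] ℂ} {n : ℕ} {c : ℂ}
    (hφ : ∀ᵐ ω ∂μ, φ (X n ω) = c) :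
    lpNorm (fun ω => φ (centered μ X n ω)) p μ = 0 := by
  have hmean : φ (∫ ω, X n ω ∂μ) = c := by
    rw [← φ.integral_comp_comm ((hX n).integrable hp), integral_congr_ae hφ, integral_const,
      probReal_univ, one_smul]
  refine (lpNorm_eq_zero (φ.comp_memLp' (memLp_centered hX n)) (one_pos.trans_le hp).ne').2 ?_
  filter_upwards [hφ] with ω hω
  simp [centered, hω, hmean]

variable {ι : Type*} [Fintype ι]

/-- The vector `l` of complex coefficients viewed as the real-linear functional
`x ↦ ∑ j, l j * x j`. -/
noncomputable def complexFunctional : (ι → ℂ) →ₗ[ℂ] (EuclideanSpace ℝ ι →L[ℝ] ℂ) :=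
  Fintype.linearCombination ℂ fun j => Complex.ofRealCLM ∘L EuclideanSpace.proj j

lemma complexFunctional_apply (l : ι → ℂ) (x : EuclideanSpace ℝ ι) :
    complexFunctional l x = ∑ j, l j * x j := by
  simp [complexFunctional, Fintype.linearCombination_apply]

variable [DecidableEq ι]

lemma complexFunctional_single (i : ι) (x : EuclideanSpace ℝ ι) :
    complexFunctional (Pi.single i 1) x = x i := by
  simp [complexFunctional_apply, Pi.single_apply]

lemma complexFunctional_transpose_mulVec (A : Matrix ι ι ℝ) (l : ι → ℂ) :
    complexFunctional ((A.map (fun x : ℝ => (x : ℂ)))ᵀ *ᵥ l) =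
      complexFunctional l ∘L toEuclideanCLM (𝕜 := ℝ) A := by
  ext x
  simp only [complexFunctional_apply, ContinuousLinearMap.comp_apply, ofLp_toEuclideanCLM, mulVec,
    dotProduct, transpose_apply, map_apply, Complex.ofReal_sum, Complex.ofReal_mul,
    Finset.mul_sum, Finset.sum_mul]
  rw [Finset.sum_comm]
  exact Finset.sum_congr rfl fun i _ => Finset.sum_congr rfl fun j _ => by ring

lemma complexFunctional_add_inv_smul_toLin' (A : Matrix ι ι ℝ) (l : ι → ℂ) (c : ℝ) :
    complexFunctional (l + (c : ℂ)⁻¹ • toLin' (A.map (fun x : ℝ => (x : ℂ)))ᵀ l) =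
      complexFunctional l + c⁻¹ • complexFunctional l ∘L toEuclideanCLM (𝕜 := ℝ) A := by
  rw [map_add, map_smul, toLin'_apply, complexFunctional_transpose_mulVec, ← Complex.ofReal_inv]
  rfl

lemma lpNorm_le_sum_lpNorm_complexFunctional (hp : 1 ≤ p) {f : Ω → EuclideanSpace ℝ ι}
    (hf : MemLp f p μ) :
    lpNorm f p μ ≤ ∑ i, lpNorm (fun ω => complexFunctional (Pi.single i 1) (f ω)) p μ := by
  have hcoord (i : ι) : MemLp (fun ω => ‖complexFunctional (Pi.single i 1) (f ω)‖) p μ :=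
    ((complexFunctional (Pi.single i 1)).comp_memLp' hf).norm
  have hnorm (x : EuclideanSpace ℝ ι) : ‖x‖ ≤ ∑ i, ‖complexFunctional (Pi.single i 1) x‖ := by
    have hx : ∑ i, EuclideanSpace.single i (x i) = x := by ext; simp [Pi.single_apply]
    simpa [complexFunctional_single, hx] using
      norm_sum_le Finset.univ fun i => EuclideanSpace.single i (x i)
  calc lpNorm f p μ
      ≤ lpNorm (∑ i, fun ω => ‖complexFunctional (Pi.single i 1) (f ω)‖) p μ :=
        lpNorm_mono_real (memLp_finsetSum' _ fun i _ => hcoord i) fun ω => by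
          simpa using hnorm (f ω)
    _ ≤ ∑ i, lpNorm (fun ω => ‖complexFunctional (Pi.single i 1) (f ω)‖) p μ :=
        lpNorm_sum_le (fun i _ => hcoord i) hp
    _ = ∑ i, lpNorm (fun ω => complexFunctional (Pi.single i 1) (f ω)) p μ := by
        refine Finset.sum_congr rfl fun i _ => lpNorm_norm ?_ p
        exact ((complexFunctional (Pi.single i 1)).comp_memLp' hf).1

end FunctionalSeminorm

section UrnFluctuation

lemma mul_log_pow_isBigO_of_add_const {w : ℕ → ℝ} {b : ℝ} (hb : 0 < b)
    (hw : ∀ n, w (n + 1) = w n + b) (k : ℕ) :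
    (fun n => w n * Real.log (w n) ^ k) =O[atTop] fun n : ℕ => (n : ℝ) * Real.log n ^ k := by
  have hwn : w =O[atTop] fun n : ℕ => (n : ℝ) := by
    rw [funext (eq_add_mul_of_add_const hw)]
    refine .add ?_ <| ((Asymptotics.isBigO_refl _ _).const_mul_left b).congr_left
      fun n => mul_comm b n
    exact (Asymptotics.isLittleO_const_left.2 <| .inr <|
      tendsto_norm_atTop_atTop.comp tendsto_natCast_atTop_atTop).isBigO
  refine hwn.mul (.pow ?_ k)
  obtain ⟨C, hC⟩ := hwn.bound
  refine .of_bound 2 ?_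
  filter_upwards [hC, (tendsto_atTop_of_add_const hb hw).eventually_ge_atTop 1,
    tendsto_natCast_atTop_atTop.eventually_ge_atTop C, eventually_ge_atTop 1] with n hn hw₁ hCn hn₁
  have hn₁ : (1 : ℝ) ≤ n := by exact_mod_cast hn₁
  rw [Real.norm_of_nonneg (Real.log_nonneg hw₁), Real.norm_of_nonneg (Real.log_nonneg hn₁)]
  rw [Real.norm_of_nonneg (by linarith), Real.norm_of_nonneg (by linarith)] at hn
  calc Real.log (w n) ≤ Real.log ((n : ℝ) ^ 2) :=
        Real.log_le_log (by linarith) (by nlinarith)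
    _ = 2 * Real.log n := by rw [Real.log_pow]; norm_cast

lemma map_ofReal_transpose_mulVec {ι : Type*} [Fintype ι] {A : Matrix ι ι ℝ} {a : ι → ℝ} {b : ℝ}
    (hA : a ᵥ* A = b • a) :
    (A.map (fun x : ℝ => (x : ℂ)))ᵀ *ᵥ (fun j => (a j : ℂ)) = (b : ℂ) • fun j => (a j : ℂ) := by
  rw [mulVec_transpose]
  ext j
  simpa [vecMul, dotProduct] using congrArg ((↑) : ℝ → ℂ) (congrFun hA j)

variable {q : ℕ} {Ω : Type*} {m₀ : MeasurableSpace Ω} {μ : Measure Ω} [IsProbabilityMeasure μ]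
  {ℱ : Filtration ℕ m₀} {A : Matrix (Fin q) (Fin q) ℝ} {w : ℕ → ℝ} {b : ℝ}
  {X : ℕ → Ω → EuclideanSpace ℝ (Fin q)} {a : Fin q → ℝ}

lemma lpNorm_complexFunctional_centered_sq_isBigO
    (h : HasLinearDrift ℱ μ (toEuclideanCLM (𝕜 := ℝ) A) w X) (hb : 0 < b)
    (hw : ∀ n, w (n + 1) = w n + b) (hA : a ᵥ* A = b • a)
    (hwn : ∀ n, ∀ᵐ ω ∂μ, ∑ j, a j * X n ω j = w n) {ν : ℕ}
    (hspec : SecondSpectrumBound (A.map (fun x : ℝ => (x : ℂ))) b ν)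
    {m : ℕ} (hX : ∀ n, MemLp (X n) (2 * m + 2 : ℕ) μ) {M : ℝ}
    (hM : ∀ n, lpNorm (fun ω => X (n + 1) ω - X n ω) (2 * m + 2 : ℕ) μ ≤ M) (l : Fin q → ℂ) :
    (fun n => lpNorm (fun ω => complexFunctional l (centered μ X n ω)) (2 * m + 2 : ℕ) μ ^ 2)
      =O[atTop] fun n => w n * Real.log (w n) ^ (2 * ν + 1) := by
  have hp : (1 : ℝ≥0∞) ≤ (2 * m + 2 : ℕ) := by norm_cast; omega
  obtain ⟨C, hC⟩ := exists_eventually_lpNorm_innovation_le (T := toEuclideanCLM (𝕜 := ℝ) A)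
    hp hb hw hX hM
  let s : ℕ → Seminorm ℂ (Fin q → ℂ) := fun n =>
    (functionalSeminorm (memLp_centered hX n) hp).comp complexFunctional
  have hs_apply (n l) : s n l =
      lpNorm (fun ω => complexFunctional l (centered μ X n ω)) (2 * m + 2 : ℕ) μ := rfl
  have hrec (l) : ∃ C', ∀ᶠ n in atTop, s (n + 1) l ^ 2 ≤
      s n (l + (w n : ℂ)⁻¹ • toLin' (A.map (fun x : ℝ => (x : ℂ)))ᵀ l) ^ 2 + C' := by
    simp_rw [hs_apply, complexFunctional_add_inv_smul_toLin']
    exact h.exists_eventually_lpNorm_clm_centered_sq_le m hX hC (complexFunctional l)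
  have ha : (fun j => (a j : ℂ)) ≠ 0 := fun ha => by
    have ha (j) : a j = 0 := Complex.ofReal_eq_zero.1 (congrFun ha j)
    have hw_zero (n) : w n = 0 := by
      obtain ⟨ω, hω⟩ := (hwn n).exists
      simpa [ha] using hω.symm
    linarith [hw 0, hw_zero 0, hw_zero 1]
  have hsa (n) : s n (fun j => (a j : ℂ)) = 0 := by
    refine lpNorm_clm_centered_eq_zero hX hp (c := w n) ?_
    filter_upwards [hwn n] with ω hω
    simp [complexFunctional_apply, ← hω]
  refine seminorm_sq_isBigO hb hw hrec (fun z => ?_) l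
  refine (hspec.trichotomy_transpose ha (map_ofReal_transpose_mulVec hA) z).imp_right
    (.imp_right fun hz v hv n => ?_)
  obtain ⟨c, rfl⟩ := Submodule.mem_span_singleton.1 (hz hv)
  rw [map_smul_eq_mul, hsa, mul_zero]

lemma lpNorm_centered_sq_isBigO (h : HasLinearDrift ℱ μ (toEuclideanCLM (𝕜 := ℝ) A) w X)
    (hb : 0 < b) (hw : ∀ n, w (n + 1) = w n + b) (hA : a ᵥ* A = b • a)
    (hwn : ∀ n, ∀ᵐ ω ∂μ, ∑ j, a j * X n ω j = w n) {ν : ℕ}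
    (hspec : SecondSpectrumBound (A.map (fun x : ℝ => (x : ℂ))) b ν)
    {m : ℕ} (hX : ∀ n, MemLp (X n) (2 * m + 2 : ℕ) μ) {M : ℝ}
    (hM : ∀ n, lpNorm (fun ω => X (n + 1) ω - X n ω) (2 * m + 2 : ℕ) μ ≤ M) :
    (fun n => lpNorm (centered μ X n) (2 * m + 2 : ℕ) μ ^ 2) =O[atTop]
      fun n : ℕ => (n : ℝ) * Real.log n ^ (2 * ν + 1) := by
  have hp : (1 : ℝ≥0∞) ≤ (2 * m + 2 : ℕ) := by norm_cast; omega
  have hsum := (Asymptotics.IsBigO.fun_sum fun i (_ : i ∈ Finset.univ) =>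
    lpNorm_complexFunctional_centered_sq_isBigO h hb hw hA hwn hspec hX hM (Pi.single i 1)).trans
      (mul_log_pow_isBigO_of_add_const hb hw _)
  refine .trans (.of_bound (Finset.univ : Finset (Fin q)).card (.of_forall fun n => ?_)) hsum
  rw [Real.norm_of_nonneg (by positivity), Real.norm_of_nonneg (by positivity)]
  refine (pow_le_pow_left₀ lpNorm_nonneg
    (lpNorm_le_sum_lpNorm_complexFunctional hp (memLp_centered hX n)) 2).trans ?_
  exact sq_sum_le_card_mul_sum_sq

end UrnFluctuation

section MomentConvergence

variable {Ω : ℕ → Type*} {m : ∀ n, MeasurableSpace (Ω n)} {μ : ∀ n, Measure (Ω n)}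
  [∀ n, IsProbabilityMeasure (μ n)] {Ω' : Type*} {m' : MeasurableSpace Ω'} {μ' : Measure Ω'}
  [IsProbabilityMeasure μ']

lemma eLpNorm_le_of_tendstoInDistribution {E : Type*} [NormedAddCommGroup E] [MeasurableSpace E]
    [BorelSpace E] {Z : ∀ n, Ω n → E} {Y : Ω' → E} (h : TendstoInDistribution Z atTop Y μ μ')
    {p K : ℝ≥0∞} (hp : p ≠ ⊤) (hK : ∀ᶠ n in atTop, eLpNorm (Z n) p (μ n) ≤ K) :
    eLpNorm Y p μ' ≤ K := by
  rcases eq_or_ne p 0 with rfl | hp₀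
  · simp
  have hp_pos : 0 < p.toReal := ENNReal.toReal_pos hp₀ hp
  have hpow (x : E) : ENNReal.ofReal (‖x‖ ^ p.toReal) = ‖x‖ₑ ^ p.toReal := by
    rw [← ENNReal.ofReal_rpow_of_nonneg (norm_nonneg x) hp_pos.le, ofReal_norm]
  have hmeas : Measurable fun x : E => ‖x‖ₑ ^ p.toReal := by fun_prop
  have hfatou := lintegral_le_liminf_lintegral_of_forall_isOpen_measure_le_liminf_measure
    (f := fun x : E => ‖x‖ ^ p.toReal)
    (continuous_norm.rpow_const fun _ => .inr hp_pos.le) (fun x => by positivity)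
    fun G hG => ProbabilityMeasure.le_liminf_measure_open_of_tendsto h.tendsto hG
  simp only [hpow, ProbabilityMeasure.coe_mk,
    lintegral_map' hmeas.aemeasurable h.aemeasurable_limit,
    lintegral_map' hmeas.aemeasurable (h.forall_aemeasurable _)] at hfatou
  simp only [eLpNorm_eq_lintegral_rpow_enorm_toReal hp₀ hp, one_div,
    ENNReal.rpow_inv_le_iff hp_pos] at hK ⊢
  exact hfatou.trans (liminf_le_of_frequently_le' hK.frequently)

lemma abs_sub_clamp_le {M : ℝ} (hM : 0 < M) (t : ℝ) : |t - max (-M) (min M t)| ≤ t ^ 2 / M := by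
  rw [le_div_iff₀ hM]
  rcases le_total M t with ht | ht
  · rw [min_eq_left ht, max_eq_right (by linarith), abs_of_nonneg (by linarith)]
    nlinarith
  · rw [min_eq_right ht]
    rcases le_total (-M) t with ht' | ht'
    · rw [max_eq_right ht', sub_self, abs_zero, zero_mul]
      positivity
    · rw [max_eq_left ht', abs_of_nonpos (by linarith)]
      nlinarith

lemma norm_clamp_le {M : ℝ} (hM : 0 ≤ M) (t : ℝ) : ‖max (-M) (min M t)‖ ≤ M := by
  rw [Real.norm_eq_abs, abs_le]
  exact ⟨le_max_left _ _, max_le (by linarith) (min_le_left _ _)⟩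

lemma abs_integral_sub_integral_clamp_le {Y : Ω' → ℝ} (hY : AEStronglyMeasurable Y μ') {K : ℝ≥0}
    (hK : eLpNorm Y 2 μ' ≤ K) {M : ℝ} (hM : 0 < M) :
    |∫ ω, Y ω ∂μ' - ∫ ω, max (-M) (min M (Y ω)) ∂μ'| ≤ K ^ 2 / M := by
  have hY₂ : MemLp Y 2 μ' := ⟨hY, hK.trans_lt ENNReal.coe_lt_top⟩
  have hclamp : Integrable (fun ω => max (-M) (min M (Y ω))) μ' :=
    .of_bound ((by fun_prop : Continuous fun t : ℝ => max (-M) (min M t)).comp_aestronglyMeasurable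
      hY) M (.of_forall fun ω => norm_clamp_le hM.le _)
  rw [← integral_sub (hY₂.integrable one_le_two) hclamp, ← Real.norm_eq_abs]
  calc ‖∫ ω, (Y ω - max (-M) (min M (Y ω))) ∂μ'‖
      ≤ ∫ ω, Y ω ^ 2 / M ∂μ' :=
        norm_integral_le_of_norm_le (hY₂.integrable_sq.div_const M)
          (.of_forall fun ω => abs_sub_clamp_le hM _)
    _ = lpNorm Y 2 μ' ^ 2 / M := by
        simpa [integral_div] using
          congrArg (· / M) (integral_norm_pow_eq_lpNorm_pow two_ne_zero hY)
    _ ≤ K ^ 2 / M := by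
        gcongr
        · exact lpNorm_nonneg
        · rw [← toReal_eLpNorm hY]
          exact ENNReal.toReal_le_coe_of_le_coe hK

-- The means of `Z n` and `Y` differ from those of their truncations at level `M` by `O(1 / M)`.
lemma tendsto_integral_of_tendstoInDistribution {Z : ∀ n, Ω n → ℝ} {Y : Ω' → ℝ}
    (h : TendstoInDistribution Z atTop Y μ μ') {K : ℝ≥0}
    (hK : ∀ᶠ n in atTop, eLpNorm (Z n) 2 (μ n) ≤ K) :
    Tendsto (fun n => ∫ ω, Z n ω ∂μ n) atTop (𝓝 (∫ ω, Y ω ∂μ')) := by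
  rw [Metric.tendsto_nhds]
  intro ε hε
  obtain ⟨M, hM, hKM⟩ : ∃ M : ℝ, 0 < M ∧ (K : ℝ) ^ 2 / M < ε / 3 :=
    ((eventually_gt_atTop 0).and ((tendsto_const_nhds.div_atTop tendsto_id).eventually_lt_const
      (by positivity))).exists
  have hcont : Continuous fun t : ℝ => max (-M) (min M t) := by fun_prop
  have hclamp := ProbabilityMeasure.tendsto_iff_forall_integral_tendsto.1 h.tendsto
    (.ofNormedAddCommGroup _ hcont M (norm_clamp_le hM.le))
  simp only [ProbabilityMeasure.coe_mk, BoundedContinuousFunction.coe_ofNormedAddCommGroup,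
    integral_map h.aemeasurable_limit hcont.aestronglyMeasurable,
    integral_map (h.forall_aemeasurable _) hcont.aestronglyMeasurable] at hclamp
  have hY := abs_integral_sub_integral_clamp_le h.aemeasurable_limit.aestronglyMeasurable
    (eLpNorm_le_of_tendstoInDistribution h ENNReal.ofNat_ne_top hK) hM
  filter_upwards [hK, Metric.tendsto_nhds.1 hclamp (ε / 3) (by positivity)] with n hn hn_clamp
  have hZ := abs_integral_sub_integral_clamp_le
    (h.forall_aemeasurable n).aestronglyMeasurable hn hM
  rw [Real.dist_eq, abs_lt] at hn_clamp ⊢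
  rw [abs_le] at hY hZ
  constructor <;> linarith [hn_clamp.1, hn_clamp.2, hY.1, hY.2, hZ.1, hZ.2]

lemma eLpNorm_comp_le_of_abs_le {E : Type*} [NormedAddCommGroup E] {Z : Ω' → E} {g : E → ℝ}
    {N : ℕ} (hg : ∀ x, |g x| ≤ 1 + ‖x‖ ^ N) {K : ℝ≥0} (hZ : AEStronglyMeasurable Z μ')
    (hK : eLpNorm Z (2 * N + 2 : ℕ) μ' ≤ K) :
    eLpNorm (fun ω => g (Z ω)) 2 μ' ≤ (1 + K ^ N : ℝ≥0) := by
  have hone : eLpNorm (fun _ : Ω' => (1 : ℝ)) 2 μ' ≤ 1 := by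
    simp [eLpNorm_const _ two_ne_zero (IsProbabilityMeasure.ne_zero μ')]
  have hpow : eLpNorm (fun ω => ‖Z ω‖ ^ N) 2 μ' ≤ (K : ℝ≥0∞) ^ N := by
    rcases Nat.eq_zero_or_pos N with rfl | hN
    · simpa using hone
    have hN' : (0 : ℝ) < N := mod_cast hN
    have h := eLpNorm_norm_rpow (p := 2) (μ := μ') Z hN'
    simp only [Real.rpow_natCast, ENNReal.rpow_natCast, ENNReal.ofReal_natCast] at h
    rw [h]
    gcongr
    exact (eLpNorm_le_eLpNorm_of_exponent_le (by norm_cast; omega) hZ).trans hK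
  calc eLpNorm (fun ω => g (Z ω)) 2 μ'
      ≤ eLpNorm ((fun _ => (1 : ℝ)) + fun ω => ‖Z ω‖ ^ N) 2 μ' :=
        eLpNorm_mono_real fun ω => hg (Z ω)
    _ ≤ eLpNorm (fun _ => (1 : ℝ)) 2 μ' + eLpNorm (fun ω => ‖Z ω‖ ^ N) 2 μ' :=
        eLpNorm_add_le (by fun_prop) (by fun_prop) one_le_two
    _ ≤ (1 + K ^ N : ℝ≥0) := by
        push_cast
        gcongr

lemma tendsto_integral_comp_of_tendstoInDistribution {E : Type*} [NormedAddCommGroup E]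
    [MeasurableSpace E] [BorelSpace E] [SecondCountableTopology E] {Z : ∀ n, Ω n → E}
    {Y : Ω' → E} (h : TendstoInDistribution Z atTop Y μ μ')
    (hK : ∀ m : ℕ, ∃ K : ℝ≥0, ∀ᶠ n in atTop, eLpNorm (Z n) (2 * m + 2 : ℕ) (μ n) ≤ K)
    {g : E → ℝ} (hg : Continuous g) (N : ℕ) (hgN : ∀ x, |g x| ≤ 1 + ‖x‖ ^ N) :
    Tendsto (fun n => ∫ ω, g (Z n ω) ∂μ n) atTop (𝓝 (∫ ω, g (Y ω) ∂μ')) := by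
  obtain ⟨K, hK⟩ := hK N
  exact tendsto_integral_of_tendstoInDistribution (h.continuous_comp hg) <| hK.mono fun n hn =>
    eLpNorm_comp_le_of_abs_le hgN (h.forall_aemeasurable n).aestronglyMeasurable hn

lemma tendsto_integral_norm_rpow_of_tendstoInDistribution {E : Type*} [NormedAddCommGroup E]
    [MeasurableSpace E] [BorelSpace E] [SecondCountableTopology E] {Z : ∀ n, Ω n → E}
    {Y : Ω' → E} (h : TendstoInDistribution Z atTop Y μ μ')
    (hK : ∀ m : ℕ, ∃ K : ℝ≥0, ∀ᶠ n in atTop, eLpNorm (Z n) (2 * m + 2 : ℕ) (μ n) ≤ K)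
    {r : ℝ} (hr : 0 ≤ r) :
    Tendsto (fun n => ∫ ω, ‖Z n ω‖ ^ r ∂μ n) atTop (𝓝 (∫ ω, ‖Y ω‖ ^ r ∂μ')) := by
  refine tendsto_integral_comp_of_tendstoInDistribution h hK (g := fun x => ‖x‖ ^ r)
    (continuous_norm.rpow_const fun _ => .inr hr) ⌈r⌉₊ fun x => ?_
  rw [abs_of_nonneg (by positivity)]
  rcases le_total ‖x‖ 1 with hx | hx
  · exact (Real.rpow_le_one (norm_nonneg x) hx hr).trans (by simp)
  · calc ‖x‖ ^ r ≤ ‖x‖ ^ (⌈r⌉₊ : ℝ) := Real.rpow_le_rpow_of_exponent_le hx (Nat.le_ceil r)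
      _ = ‖x‖ ^ ⌈r⌉₊ := Real.rpow_natCast _ _
      _ ≤ 1 + ‖x‖ ^ ⌈r⌉₊ := by linarith

lemma tendsto_integral_prod_pow_of_tendstoInDistribution {ι : Type*} [Fintype ι]
    {Z : ∀ n, Ω n → EuclideanSpace ℝ ι} {Y : Ω' → EuclideanSpace ℝ ι}
    (h : TendstoInDistribution Z atTop Y μ μ')
    (hK : ∀ m : ℕ, ∃ K : ℝ≥0, ∀ᶠ n in atTop, eLpNorm (Z n) (2 * m + 2 : ℕ) (μ n) ≤ K)
    (α : ι → ℕ) :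
    Tendsto (fun n => ∫ ω, ∏ j, Z n ω j ^ α j ∂μ n) atTop (𝓝 (∫ ω, ∏ j, Y ω j ^ α j ∂μ')) := by
  refine tendsto_integral_comp_of_tendstoInDistribution h hK (g := fun x => ∏ j, x j ^ α j)
    (by fun_prop) (∑ j, α j) fun x => ?_
  calc |∏ j, x j ^ α j| = ∏ j, |x j| ^ α j := by simp only [Finset.abs_prod, abs_pow]
    _ ≤ ∏ j, ‖x‖ ^ α j :=
      Finset.prod_le_prod (fun j _ => by positivity) fun j _ =>
        pow_le_pow_left₀ (abs_nonneg _) (PiLp.norm_apply_le x j) _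
    _ = ‖x‖ ^ ∑ j, α j := Finset.prod_pow_eq_pow_sum _ _ _
    _ ≤ 1 + ‖x‖ ^ ∑ j, α j := by linarith

lemma tendsto_integral_mul_of_tendstoInDistribution {ι : Type*} [Fintype ι]
    {Z : ∀ n, Ω n → EuclideanSpace ℝ ι} {Y : Ω' → EuclideanSpace ℝ ι}
    (h : TendstoInDistribution Z atTop Y μ μ')
    (hK : ∀ m : ℕ, ∃ K : ℝ≥0, ∀ᶠ n in atTop, eLpNorm (Z n) (2 * m + 2 : ℕ) (μ n) ≤ K)
    (i j : ι) :
    Tendsto (fun n => ∫ ω, Z n ω i * Z n ω j ∂μ n) atTop (𝓝 (∫ ω, Y ω i * Y ω j ∂μ')) := by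
  refine tendsto_integral_comp_of_tendstoInDistribution h hK (g := fun x => x i * x j)
    (by fun_prop) 2 fun x => ?_
  calc |x i * x j| = ‖x i‖ * ‖x j‖ := abs_mul _ _
    _ ≤ ‖x‖ * ‖x‖ := by gcongr <;> exact PiLp.norm_apply_le x _
    _ ≤ 1 + ‖x‖ ^ 2 := by linarith [sq ‖x‖]

end MomentConvergence

section GaussianCovariance

variable {Ω : Type*} {m₀ : MeasurableSpace Ω} {μ : Measure Ω}

lemma memLp_two_of_hasLaw_gaussianReal {Y : Ω → ℝ} {c : ℝ} {v : ℝ≥0}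
    (hY : ProbabilityTheory.HasLaw Y (ProbabilityTheory.gaussianReal c v) μ) : MemLp Y 2 μ :=
  (memLp_map_measure_iff aestronglyMeasurable_id hY.aemeasurable).1
    (hY.map_eq ▸ ProbabilityTheory.memLp_id_gaussianReal 2)

lemma integral_sq_of_hasLaw_gaussianReal {Y : Ω → ℝ} {v : ℝ≥0}
    (hY : ProbabilityTheory.HasLaw Y (ProbabilityTheory.gaussianReal 0 v) μ) :
    ∫ ω, Y ω ^ 2 ∂μ = v := by
  rw [← ProbabilityTheory.variance_id_gaussianReal (μ := 0) (v := v), ← hY.variance_eq,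
    ProbabilityTheory.variance_of_integral_eq_zero hY.aemeasurable
      (hY.integral_eq.trans ProbabilityTheory.integral_id_gaussianReal)]

lemma integral_mul_eq_of_integral_sq_dotProduct {ι : Type*} [Fintype ι] {Y : Ω → ι → ℝ}
    {S : Matrix ι ι ℝ} (hS : S.IsSymm) (hY : ∀ l, MemLp (fun ω => l ⬝ᵥ Y ω) 2 μ)
    (hYS : ∀ l, ∫ ω, (l ⬝ᵥ Y ω) ^ 2 ∂μ = l ⬝ᵥ S *ᵥ l) (i j : ι) :
    ∫ ω, Y ω i * Y ω j ∂μ = S i j := by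
  classical
  have hpol : (fun ω => Y ω i * Y ω j) = fun ω => (((Pi.single i 1 + Pi.single j 1) ⬝ᵥ Y ω) ^ 2 -
      (Pi.single i 1 ⬝ᵥ Y ω) ^ 2 - (Pi.single j 1 ⬝ᵥ Y ω) ^ 2) / 2 := by
    ext ω
    simp only [add_dotProduct, single_one_dotProduct]
    ring
  have hsub : Integrable (fun ω => ((Pi.single i 1 + Pi.single j 1) ⬝ᵥ Y ω) ^ 2 -
      (Pi.single i 1 ⬝ᵥ Y ω) ^ 2) μ := (hY _).integrable_sq.sub (hY _).integrable_sq
  rw [hpol, integral_div, integral_sub hsub (hY _).integrable_sq,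
    integral_sub (hY _).integrable_sq (hY _).integrable_sq, hYS, hYS, hYS]
  simp only [mulVec_add, add_dotProduct, dotProduct_add, single_one_dotProduct, mulVec_single_one,
    col_apply, hS.apply i j]
  ring

lemma integral_mul_eq_of_forall_map_eq_gaussianReal {ι : Type*} [Fintype ι] {S : Matrix ι ι ℝ}
    (hS : S.PosSemidef) {ν : Measure (EuclideanSpace ℝ ι)}
    (hν : ∀ l : ι → ℝ, ν.map (fun x => ∑ j, l j * x j) =
      ProbabilityTheory.gaussianReal 0 (∑ i, ∑ j, l i * S i j * l j).toNNReal) (i j : ι) :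
    ∫ x, x i * x j ∂ν = S i j := by
  have hlaw (l : ι → ℝ) : ProbabilityTheory.HasLaw (fun x : EuclideanSpace ℝ ι => l ⬝ᵥ x.ofLp)
      (ProbabilityTheory.gaussianReal 0 (∑ i, ∑ j, l i * S i j * l j).toNNReal) ν :=
    ⟨(by fun_prop : Measurable fun x : EuclideanSpace ℝ ι => ∑ j, l j * x j).aemeasurable, hν l⟩
  have hquad (l : ι → ℝ) : ∑ i, ∑ j, l i * S i j * l j = l ⬝ᵥ S *ᵥ l := by
    simp only [dotProduct, mulVec, Finset.mul_sum, mul_assoc]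
  refine integral_mul_eq_of_integral_sq_dotProduct (by simpa using hS.isHermitian)
    (fun l => memLp_two_of_hasLaw_gaussianReal (hlaw l)) (fun l => ?_) i j
  rw [integral_sq_of_hasLaw_gaussianReal (hlaw l), hquad,
    Real.coe_toNNReal _ (by simpa using hS.dotProduct_mulVec_nonneg l)]

end GaussianCovariance

section UrnMoments

variable {Ω E : Type*} {m₀ : MeasurableSpace Ω} {μ : Measure Ω} [NormedAddCommGroup E] {p : ℝ≥0∞}

lemma memLp_of_iSup_eLpNorm_lt_top {f : ℕ → Ω → E} (hf : ∀ n, AEStronglyMeasurable (f n) μ)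
    (h : ⨆ n, eLpNorm (f n) p μ < ⊤) (n : ℕ) : MemLp (f n) p μ :=
  ⟨hf n, (le_iSup (fun n => eLpNorm (f n) p μ) n).trans_lt h⟩

lemma lpNorm_le_toReal_iSup {f : ℕ → Ω → E} (hf : ∀ n, AEStronglyMeasurable (f n) μ)
    (h : ⨆ n, eLpNorm (f n) p μ < ⊤) (n : ℕ) :
    lpNorm (f n) p μ ≤ (⨆ n, eLpNorm (f n) p μ).toReal := by
  rw [← toReal_eLpNorm (hf n)]
  exact ENNReal.toReal_mono h.ne (le_iSup (fun n => eLpNorm (f n) p μ) n)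

lemma memLp_of_memLp_increment {X : ℕ → Ω → E} (h₀ : MemLp (X 0) p μ)
    (h : ∀ n, MemLp (fun ω => X (n + 1) ω - X n ω) p μ) (n : ℕ) : MemLp (X n) p μ := by
  induction n with
  | zero => exact h₀
  | succ n ih => simpa [Pi.add_def] using ih.add (h n)

lemma exists_eventually_eLpNorm_div_sqrt_le [NormedSpace ℝ E] {f : ℕ → Ω → E} {V : ℕ → ℝ}
    (hf : ∀ n, MemLp (f n) p μ) (hV : ∀ᶠ n in atTop, 0 < V n)
    (h : (fun n => lpNorm (f n) p μ ^ 2) =O[atTop] V) :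
    ∃ K : ℝ≥0, ∀ᶠ n in atTop, eLpNorm (fun ω => (1 / √(V n)) • f n ω) p μ ≤ K := by
  obtain ⟨C, hC⟩ := h.bound
  refine ⟨(√C).toNNReal, ?_⟩
  filter_upwards [hC, hV] with n hn hVn
  rw [Real.norm_of_nonneg (by positivity), Real.norm_of_nonneg hVn.le] at hn
  change eLpNorm ((1 / √(V n)) • f n) p μ ≤ ENNReal.ofReal √C
  rw [← ofReal_lpNorm ((hf n).const_smul _), lpNorm_const_smul, coe_nnnorm,
    Real.norm_of_nonneg (by positivity), one_div_mul_eq_div]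
  refine ENNReal.ofReal_le_ofReal (Real.le_sqrt_of_sq_le ?_)
  rwa [div_pow, Real.sq_sqrt hVn.le, div_le_iff₀ hVn]

lemma integral_rescaled_mul {ι : Type*} (Y : Ω → EuclideanSpace ℝ ι) {V : ℝ} (hV : 0 ≤ V)
    (i j : ι) :
    ∫ ω, ((1 / √V) • Y ω) i * ((1 / √V) • Y ω) j ∂μ = (∫ ω, Y ω i * Y ω j ∂μ) / V := by
  rw [← integral_div]
  refine integral_congr_ae (.of_forall fun ω => ?_)
  simp only [PiLp.smul_apply, smul_eq_mul]
  rw [mul_mul_mul_comm, div_mul_div_comm, Real.mul_self_sqrt hV]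
  ring

variable {q : ℕ} {ℱ : Filtration ℕ m₀} [IsProbabilityMeasure μ] {A : Matrix (Fin q) (Fin q) ℝ}
  {w : ℕ → ℝ} {b : ℝ} {X : ℕ → Ω → EuclideanSpace ℝ (Fin q)} {a : Fin q → ℝ}

lemma exists_eventually_eLpNorm_rescaled_centered_le
    (h : HasLinearDrift ℱ μ (toEuclideanCLM (𝕜 := ℝ) A) w X) (hb : 0 < b)
    (hw : ∀ n, w (n + 1) = w n + b) (hA : a ᵥ* A = b • a)
    (hwn : ∀ n, ∀ᵐ ω ∂μ, ∑ j, a j * X n ω j = w n) {ν : ℕ}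
    (hspec : SecondSpectrumBound (A.map (fun x : ℝ => (x : ℂ))) b ν) {m : ℕ}
    (h₀ : MemLp (X 0) (2 * m + 2 : ℕ) μ)
    (hinc : ⨆ n, eLpNorm (fun ω => X (n + 1) ω - X n ω) (2 * m + 2 : ℕ) μ < ⊤) :
    ∃ K : ℝ≥0, ∀ᶠ n : ℕ in atTop, eLpNorm (fun ω =>
      (1 / √((n : ℝ) * Real.log n ^ (2 * ν + 1))) • centered μ X n ω) (2 * m + 2 : ℕ) μ ≤ K := by
  have hinc_meas (n) : AEStronglyMeasurable (fun ω => X (n + 1) ω - X n ω) μ :=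
    (h.integrable (n + 1)).1.sub (h.integrable n).1
  have hX := memLp_of_memLp_increment h₀ (memLp_of_iSup_eLpNorm_lt_top hinc_meas hinc)
  refine exists_eventually_eLpNorm_div_sqrt_le (memLp_centered hX) ?_
    (lpNorm_centered_sq_isBigO h hb hw hA hwn hspec hX (lpNorm_le_toReal_iSup hinc_meas hinc))
  filter_upwards [eventually_gt_atTop 1] with n hn
  have hlog : 0 < Real.log n := Real.log_pos (mod_cast hn)
  positivity

lemma tendstoInDistribution_id_of_forall_tendsto_integral [MeasurableSpace E] [BorelSpace E]
    {Z : ℕ → Ω → E} (hZ : ∀ n, AEMeasurable (Z n) μ) {ν : Measure E} [IsProbabilityMeasure ν]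
    (h : ∀ f : BoundedContinuousFunction E ℝ,
      Tendsto (fun n => ∫ ω, f (Z n ω) ∂μ) atTop (𝓝 (∫ x, f x ∂ν))) :
    TendstoInDistribution Z atTop id (fun _ => μ) ν where
  forall_aemeasurable := hZ
  tendsto := ProbabilityMeasure.tendsto_iff_forall_integral_tendsto.2 fun f => by
    simpa [integral_map (hZ _) f.continuous.measurable.aestronglyMeasurable] using h f

end UrnMoments

theorem urn_critical_clt_moment_convergence_general {q : ℕ} {Ω : Type*} {m₀ : MeasurableSpace Ω}
    {μ : Measure Ω} [IsProbabilityMeasure μ] {ℱ : Filtration ℕ m₀} {a : Fin q → ℝ} {b : ℝ}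
    (hb : 0 < b) {A : Matrix (Fin q) (Fin q) ℝ} (hA : a ᵥ* A = b • a)
    {X : ℕ → Ω → EuclideanSpace ℝ (Fin q)} {w : ℕ → ℝ} (hw : ∀ n, w (n + 1) = w n + b)
    (hwn : ∀ n, ∀ᵐ ω ∂μ, ∑ j, a j * X n ω j = w n)
    (hdrift : HasLinearDrift ℱ μ (toEuclideanCLM (𝕜 := ℝ) A) w X)
    (h₀ : ∀ p : ℝ, 2 ≤ p → MemLp (X 0) (ENNReal.ofReal p) μ)
    (hmom : ∀ p : ℝ, 2 ≤ p →
      (⨆ n : ℕ, eLpNorm (fun ω => X (n + 1) ω - X n ω) (ENNReal.ofReal p) μ) < ⊤)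
    {ν : ℕ} (hspec : SecondSpectrumBound (A.map (fun x : ℝ => (x : ℂ))) b ν)
    {Ω' : Type*} {m' : MeasurableSpace Ω'} {μ' : Measure Ω'} [IsProbabilityMeasure μ']
    {Y : Ω' → EuclideanSpace ℝ (Fin q)}
    (hconv : TendstoInDistribution (fun (n : ℕ) ω =>
      (1 / √((n : ℝ) * Real.log n ^ (2 * ν + 1))) • centered μ X n ω) atTop Y (fun _ => μ) μ') :
    (∀ r : ℝ, 0 ≤ r → Tendsto (fun n : ℕ =>
        ∫ ω, ‖(1 / √((n : ℝ) * Real.log n ^ (2 * ν + 1))) • centered μ X n ω‖ ^ r ∂μ)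
      atTop (𝓝 (∫ ω, ‖Y ω‖ ^ r ∂μ'))) ∧
    (∀ α : Fin q → ℕ, Tendsto (fun n : ℕ =>
        ∫ ω, ∏ j, ((1 / √((n : ℝ) * Real.log n ^ (2 * ν + 1))) • centered μ X n ω) j ^ α j ∂μ)
      atTop (𝓝 (∫ ω, ∏ j, Y ω j ^ α j ∂μ'))) ∧
    (∀ i j : Fin q, Tendsto (fun n : ℕ =>
        (∫ ω, centered μ X n ω i * centered μ X n ω j ∂μ) /
          ((n : ℝ) * Real.log n ^ (2 * ν + 1)))
      atTop (𝓝 (∫ ω, Y ω i * Y ω j ∂μ'))) := by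
  have hbound (m : ℕ) := by
    have hp : (2 : ℝ) ≤ (2 * m + 2 : ℕ) := by norm_cast; omega
    exact exists_eventually_eLpNorm_rescaled_centered_le hdrift hb hw hA hwn hspec
      (by simpa only [ENNReal.ofReal_natCast] using h₀ _ hp)
      (by simpa only [ENNReal.ofReal_natCast] using hmom _ hp)
  refine ⟨fun r => tendsto_integral_norm_rpow_of_tendstoInDistribution hconv hbound,
    tendsto_integral_prod_pow_of_tendstoInDistribution hconv hbound, fun i j => ?_⟩
  refine (tendsto_integral_mul_of_tendstoInDistribution hconv hbound i j).congr fun n => ?_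
  exact integral_rescaled_mul _ (by positivity) i j

/-- Under the Pólya urn hypotheses, assume all moment conditions
(sup_n ‖X_{n+1} − X_n‖_p < ∞ for every p ≥ 2), that Re λ₂ = b/2 (λ₂ being the second
eigenvalue in the stated ordering, λ₁ = b the largest, and ν₂ := ν_{λ₂} maximal among
the candidates with real part b/2), and that (X_n − E X_n)/√(n (log n)^{2ν₂+1}) converges
in distribution to the centered Gaussian law N(0, Σ) on ℝ^q (characterized by: every
linear image l·Z has the one-dimensional law N(0, l'Σl)). Then the convergence holds with
convergence of all moments: all absolute moments of order r ≥ 1 and all mixed moments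
converge, and in particular Cov(X_n)/(n (log n)^{2ν₂+1}) → Σ entrywise. -/
theorem urn_critical_clt_moment_convergence
    (q : ℕ) (hq : 2 ≤ q) {Ω : Type} {m0 : MeasurableSpace Ω}
    (μ : Measure Ω) [IsProbabilityMeasure μ] (ℱ : Filtration ℕ m0)
    (a : Fin q → ℝ) (b : ℝ) (hb : 0 < b)
    (A : Matrix (Fin q) (Fin q) ℝ) (hA : Matrix.vecMul a A = b • a)
    (X : ℕ → Ω → EuclideanSpace ℝ (Fin q)) (hadp : Adapted ℱ X)
    (hXint : ∀ n, Integrable (X n) μ)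
    (x₀ : EuclideanSpace ℝ (Fin q)) (hX0 : X 0 = fun _ => x₀)
    (hw₀ : 0 < ∑ j, a j * x₀ j)
    (hwn : ∀ n : ℕ, ∀ᵐ ω ∂μ, ∑ j, a j * X n ω j = (∑ j, a j * x₀ j) + (n : ℝ) * b)
    (hcond : ∀ n : ℕ, μ[fun ω => X (n + 1) ω - X n ω | ℱ n] =ᵐ[μ]
      fun ω => ((∑ j, a j * x₀ j) + (n : ℝ) * b)⁻¹ • (Matrix.toEuclideanCLM (𝕜 := ℝ) A (X n ω)))
    (hmom : ∀ p : ℝ, 2 ≤ p →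
      (⨆ n : ℕ, eLpNorm (fun ω => X (n + 1) ω - X n ω) (ENNReal.ofReal p) μ) < ⊤)
    (hspec : (b : ℂ) ∈ spectrum ℂ (A.map (fun x : ℝ => (x : ℂ))))
    (hmax : ∀ mu ∈ spectrum ℂ (A.map (fun x : ℝ => (x : ℂ))), mu.re ≤ b)
    (lam2 : ℂ) (hlam2 : MemSecondEigSet (A.map (fun x : ℝ => (x : ℂ))) b lam2)
    (hcrit : lam2.re = b / 2)
    (h2max : ∀ mu : ℂ, MemSecondEigSet (A.map (fun x : ℝ => (x : ℂ))) b mu → mu.re ≤ b / 2)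
    (P2 : Matrix (Fin q) (Fin q) ℂ)
    (hP2 : IsSpectralProj (A.map (fun x : ℝ => (x : ℂ))) lam2 P2)
    (ν₂ : ℕ) (hν2 : NilIndexOf (A.map (fun x : ℝ => (x : ℂ))) lam2 P2 ν₂)
    (hν2max : ∀ (mu : ℂ) (P' : Matrix (Fin q) (Fin q) ℂ) (ν' : ℕ),
      MemSecondEigSet (A.map (fun x : ℝ => (x : ℂ))) b mu → mu.re = b / 2 →
      IsSpectralProj (A.map (fun x : ℝ => (x : ℂ))) mu P' →
      NilIndexOf (A.map (fun x : ℝ => (x : ℂ))) mu P' ν' → ν' ≤ ν₂)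
    (Sig : Matrix (Fin q) (Fin q) ℝ) (hSig : Sig.PosSemidef)
    (νlim : Measure (EuclideanSpace ℝ (Fin q))) (hνlim : IsProbabilityMeasure νlim)
    (hGauss : ∀ l : Fin q → ℝ,
      Measure.map (fun x : EuclideanSpace ℝ (Fin q) => ∑ j, l j * x j) νlim =
        ProbabilityTheory.gaussianReal 0 (Real.toNNReal (∑ i, ∑ j, l i * Sig i j * l j)))
    (hconv : ∀ f : BoundedContinuousFunction (EuclideanSpace ℝ (Fin q)) ℝ,
      Tendsto (fun n : ℕ =>
          ∫ ω, f ((1 / Real.sqrt ((n : ℝ) * Real.log n ^ (2 * ν₂ + 1))) •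
            (X n ω - ∫ ω', X n ω' ∂μ)) ∂μ)
        atTop (nhds (∫ x, f x ∂νlim))) :
    (∀ r : ℝ, 1 ≤ r →
      Tendsto (fun n : ℕ =>
          ∫ ω, ‖(1 / Real.sqrt ((n : ℝ) * Real.log n ^ (2 * ν₂ + 1))) •
            (X n ω - ∫ ω', X n ω' ∂μ)‖ ^ r ∂μ)
        atTop (nhds (∫ x, ‖x‖ ^ r ∂νlim))) ∧
    (∀ α : Fin q → ℕ,
      Tendsto (fun n : ℕ =>
          ∫ ω, ∏ j, ((1 / Real.sqrt ((n : ℝ) * Real.log n ^ (2 * ν₂ + 1))) •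
            (X n ω - ∫ ω', X n ω' ∂μ) : EuclideanSpace ℝ (Fin q)) j ^ α j ∂μ)
        atTop (nhds (∫ x : EuclideanSpace ℝ (Fin q), ∏ j, x j ^ α j ∂νlim))) ∧
    (∀ i j : Fin q,
      Tendsto (fun n : ℕ =>
          (∫ ω, (X n ω i - (∫ ω', X n ω' ∂μ) i) * (X n ω j - (∫ ω', X n ω' ∂μ) j) ∂μ) /
            ((n : ℝ) * Real.log n ^ (2 * ν₂ + 1)))
        atTop (nhds (Sig i j))) := by
  have hw_pos (n : ℕ) : 0 < (∑ j, a j * x₀ j) + (n : ℝ) * b := by positivity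
  have hdrift : HasLinearDrift ℱ μ (toEuclideanCLM (𝕜 := ℝ) A)
      (fun n => (∑ j, a j * x₀ j) + (n : ℝ) * b) X :=
    ⟨fun n => (hw_pos n).ne', fun n => (hadp n).stronglyMeasurable, hXint, hcond⟩
  have hlaw : TendstoInDistribution (fun (n : ℕ) ω =>
      (1 / √((n : ℝ) * Real.log n ^ (2 * ν₂ + 1))) • centered μ X n ω) atTop id (fun _ => μ) νlim :=
    tendstoInDistribution_id_of_forall_tendsto_integral
      (fun n => ((hXint n).aemeasurable.sub_const (∫ ω', X n ω' ∂μ)).fun_const_smul _) hconv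
  obtain ⟨habs, hmixed, hcov⟩ := urn_critical_clt_moment_convergence_general hb hA
    (fun n => by push_cast; ring) hwn hdrift (fun p _ => hX0 ▸ memLp_const x₀) hmom
    ⟨h2max, fun mu P' ν' => hν2max mu P' ν'⟩ hlaw
  refine ⟨fun r hr => habs r (zero_le_one.trans hr), hmixed, fun i j => ?_⟩
  rw [← integral_mul_eq_of_forall_map_eq_gaussianReal hSig hGauss i j]
  exact hcov i j
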